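/- arXiv:1801.00120 — 8 statements merged into one kernel-verified Lean document; each statement's English description precedes it below -/
import Mathlib

section
/- Let α, β, μ ∈ (−1, ∞) and ν ∈ [0, ∞). Then ∫₀¹ ∫₀¹ t^μ (1−t)^α |t−s|^β s^ν ds dt ≤ B(μ+ν+β+2, α+1)·B(β+1, ν+1) + (1/(β+1))·B(μ+1, α+β+2). -/
/-- The Euler Beta function, `B(x,y) = ∫₀¹ u^{x−1}(1−u)^{y−1} du`. -/
noncomputable def betaB (x y : ℝ) : ℝ := ∫ u in (0:ℝ)..1, u ^ (x - 1) * (1 - u) ^ (y - 1)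

open MeasureTheory intervalIntegral in
lemma aux_betaInt (a b : ℝ) (ha : -1 < a) (hb : -1 < b) :
    IntervalIntegrable (fun u : ℝ => u ^ a * (1 - u) ^ b) volume 0 1 := by
  have h := (Complex.betaIntegral_convergent (u := ((a + 1 : ℝ) : ℂ)) (v := ((b + 1 : ℝ) : ℂ))
    (by rw [Complex.ofReal_re]; linarith) (by rw [Complex.ofReal_re]; linarith)).norm
  rw [intervalIntegrable_iff_integrableOn_Ioo_of_le zero_le_one] at h ⊢
  refine h.congr_fun ?_ measurableSet_Ioo
  intro u hu
  have h1 : 0 < u := hu.1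
  have h2 : 0 < 1 - u := by linarith [hu.2]
  have e : (1 - (u : ℂ)) = ((1 - u : ℝ) : ℂ) := by push_cast; rfl
  simp only [norm_mul]
  rw [e, Complex.norm_cpow_eq_rpow_re_of_pos h1, Complex.norm_cpow_eq_rpow_re_of_pos h2]
  simp

open MeasureTheory intervalIntegral in
lemma aux_left (β ν t : ℝ) (hβ : -1 < β) (hν : 0 ≤ ν) (ht : 0 < t) :
    IntervalIntegrable (fun s : ℝ => |t - s| ^ β * s ^ ν) volume 0 t ∧
    ∫ s in (0:ℝ)..t, |t - s| ^ β * s ^ ν = t ^ (β + ν + 1) * betaB (β + 1) (ν + 1) := by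
  constructor
  · have h := (intervalIntegrable_rpow' (a := t) (b := 0) hβ).comp_sub_left t
    simp only [sub_self, sub_zero] at h
    refine IntervalIntegrable.mul_continuousOn (f := fun s : ℝ => |t - s| ^ β) ?_
      (Real.continuous_rpow_const hν).continuousOn
    refine h.congr ?_
    intro s hs
    rw [Set.uIoc_of_le ht.le] at hs
    simp only
    rw [abs_of_nonneg (by linarith [hs.2])]
  · have h := intervalIntegral.mul_integral_comp_sub_mul (a := 0) (b := 1) (f :=
      fun s : ℝ => |t - s| ^ β * s ^ ν) t t
    simp only [mul_zero, mul_one, sub_zero, sub_self] at h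
    rw [← h, betaB, ← intervalIntegral.integral_const_mul, ← intervalIntegral.integral_const_mul]
    refine intervalIntegral.integral_congr ?_
    intro u hu
    rw [Set.uIcc_of_le zero_le_one] at hu
    simp only [sub_sub_cancel, add_sub_cancel_right]
    rw [abs_of_nonneg (mul_nonneg ht.le hu.1), show t - t * u = t * (1 - u) by ring,
      Real.mul_rpow ht.le hu.1, Real.mul_rpow ht.le (by linarith [hu.2]),
      Real.rpow_add ht, Real.rpow_add ht, Real.rpow_one]
    ring

open MeasureTheory intervalIntegral in
lemma aux_right (β ν t : ℝ) (hβ : -1 < β) (hν : 0 ≤ ν) (ht : 0 < t) (ht1 : t < 1) :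
    IntervalIntegrable (fun s : ℝ => |t - s| ^ β * s ^ ν) volume t 1 ∧
    ∫ s in t..1, |t - s| ^ β * s ^ ν ≤ (1 / (β + 1)) * (1 - t) ^ (β + 1) := by
  have h := (intervalIntegrable_rpow' (a := 0) (b := 1 - t) hβ).comp_sub_right t
  simp only [zero_add, sub_add_cancel] at h
  have hi : IntervalIntegrable (fun s : ℝ => |t - s| ^ β * s ^ ν) volume t 1 := by
    refine IntervalIntegrable.mul_continuousOn (f := fun s : ℝ => |t - s| ^ β) ?_
      (Real.continuous_rpow_const hν).continuousOn
    refine h.congr ?_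
    intro s hs
    rw [Set.uIoc_of_le ht1.le] at hs
    simp only
    rw [abs_sub_comm, abs_of_nonneg (by linarith [hs.1])]
  refine ⟨hi, ?_⟩
  have e : ∫ s in t..1, (s - t) ^ β = (1 / (β + 1)) * (1 - t) ^ (β + 1) := by
    rw [intervalIntegral.integral_comp_sub_right (fun x : ℝ => x ^ β), sub_self,
      integral_rpow (Or.inl hβ), Real.zero_rpow (by linarith)]
    ring
  rw [← e]
  refine intervalIntegral.integral_mono_on ht1.le hi h ?_
  intro s hs
  rw [abs_sub_comm, abs_of_nonneg (by linarith [hs.1])]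
  exact mul_le_of_le_one_right (Real.rpow_nonneg (by linarith [hs.1]) _)
    (Real.rpow_le_one (by linarith [hs.1]) hs.2 hν)

open MeasureTheory intervalIntegral in
/-- Lemma 4 (i): for `α, β, μ ∈ (−1,∞)` and `ν ∈ [0,∞)`,
`∫₀¹∫₀¹ t^μ (1−t)^α |t−s|^β s^ν ds dt ≤ B(μ+ν+β+2, α+1)·B(β+1, ν+1) + B(μ+1, α+β+2)/(β+1)`. -/
theorem stmt0 (α β μ ν : ℝ) (hα : -1 < α) (hβ : -1 < β) (hμ : -1 < μ) (hν : 0 ≤ ν) :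
    (∫ t in (0:ℝ)..1, ∫ s in (0:ℝ)..1, t ^ μ * (1 - t) ^ α * |t - s| ^ β * s ^ ν)
      ≤ betaB (μ + ν + β + 2) (α + 1) * betaB (β + 1) (ν + 1)
        + (1 / (β + 1)) * betaB (μ + 1) (α + β + 2) := by
  have i1 := (aux_betaInt (μ + ν + β + 2 - 1) (α + 1 - 1) (by linarith) (by linarith)).mul_const
    (betaB (β + 1) (ν + 1))
  have i2 := (aux_betaInt (μ + 1 - 1) (α + β + 2 - 1) (by linarith) (by linarith)).const_mul
    (1 / (β + 1))
  have e : betaB (μ + ν + β + 2) (α + 1) * betaB (β + 1) (ν + 1)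
        + (1 / (β + 1)) * betaB (μ + 1) (α + β + 2) = _ :=
    (congrArg₂ (· + ·) (intervalIntegral.integral_mul_const _ _).symm
      (intervalIntegral.integral_const_mul _ _).symm).trans
      (intervalIntegral.integral_add i1 i2).symm
  rw [e]
  have i3 := i1.add i2
  rw [intervalIntegral.integral_of_le zero_le_one, intervalIntegral.integral_of_le zero_le_one,
    integral_Ioc_eq_integral_Ioo, integral_Ioc_eq_integral_Ioo]
  rw [intervalIntegrable_iff_integrableOn_Ioo_of_le zero_le_one] at i3
  refine integral_mono_of_nonneg ?_ i3 ?_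
  · refine (ae_restrict_iff' measurableSet_Ioo).2 (Filter.Eventually.of_forall fun t ht => ?_)
    refine intervalIntegral.integral_nonneg zero_le_one fun s hs => ?_
    have h1 : 0 ≤ 1 - t := by linarith [ht.2]
    have h2 : 0 ≤ t := ht.1.le
    have h3 : 0 ≤ s := hs.1
    positivity
  · refine (ae_restrict_iff' measurableSet_Ioo).2 (Filter.Eventually.of_forall fun t ht => ?_)
    obtain ⟨ht0, ht1⟩ := ht
    have h1 : 0 < 1 - t := by linarith
    obtain ⟨a1, a2⟩ := aux_left β ν t hβ hν ht0
    obtain ⟨b1, b2⟩ := aux_right β ν t hβ hν ht0 ht1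
    have hc : 0 ≤ t ^ μ * (1 - t) ^ α := by positivity
    simp only [mul_assoc (t ^ μ * (1 - t) ^ α)]
    rw [intervalIntegral.integral_const_mul, ← intervalIntegral.integral_add_adjacent_intervals a1 b1,
      a2]
    refine (mul_le_mul_of_nonneg_left (add_le_add_right b2 _) hc).trans (le_of_eq ?_)
    rw [show μ + ν + β + 2 - 1 = μ + (β + ν + 1) by ring, show α + β + 2 - 1 = α + (β + 1) by ring,
      add_sub_cancel_right, add_sub_cancel_right, Real.rpow_add ht0 μ, Real.rpow_add h1 α]
    ring
end

section
/- Fix α, β ∈ (−1, ∞) and define B(α,β,μ,ν) = B(μ+ν+β+2, α+1)·B(β+1, ν+1) + (1/(β+1))·B(μ+1, α+β+2) for μ ∈ (−1,∞), ν ∈ [0,∞). Then, as μ → ∞ and ν → ∞ jointly (along the product filter atTop × atTop), the ratio B(α,β,μ,ν) / [Γ(α+1)Γ(β+1)/((μ+ν)^{α+1} ν^{β+1}) + Γ(α+β+2)/((β+1) μ^{α+β+2})] converges to 1. -/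
open Filter

/-- The bound `B(α,β,μ,ν)` of Lemma 4. -/
noncomputable def Bfun (α β μ ν : ℝ) : ℝ :=
  betaB (μ + ν + β + 2) (α + 1) * betaB (β + 1) (ν + 1)
    + (1 / (β + 1)) * betaB (μ + 1) (α + β + 2)

open Topology

lemma betaB_eq (x y : ℝ) (hx : 0 < x) (hy : 0 < y) :
    betaB x y = Real.Gamma x * Real.Gamma y / Real.Gamma (x + y) := by
  have h := ProbabilityTheory.beta_eq_betaIntegralReal x y hx hy
  rw [ProbabilityTheory.beta] at h
  rw [h, betaB, Complex.betaIntegral]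
  have : (∫ u in (0:ℝ)..1, (u:ℂ) ^ ((x:ℂ) - 1) * (1 - (u:ℂ)) ^ ((y:ℂ) - 1))
      = ∫ u in (0:ℝ)..1, ((u ^ (x - 1) * (1 - u) ^ (y - 1) : ℝ) : ℂ) := by
    apply intervalIntegral.integral_congr
    intro u hu
    rw [Set.uIcc_of_le zero_le_one] at hu
    have h1 := Complex.ofReal_cpow hu.1 (x - 1)
    have h2 := Complex.ofReal_cpow (sub_nonneg.2 hu.2) (y - 1)
    push_cast at h1 h2 ⊢
    rw [h1, h2]
  rw [this, intervalIntegral.integral_ofReal, Complex.ofReal_re]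

lemma betaB_comm' (x y : ℝ) (hx : 0 < x) (hy : 0 < y) : betaB x y = betaB y x := by
  rw [betaB_eq x y hx hy, betaB_eq y x hy hx, mul_comm, add_comm]

lemma shift_div (c : ℝ) : Tendsto (fun x : ℝ => (x + c) / x) atTop (𝓝 1) := by
  have h : Tendsto (fun x : ℝ => 1 + c * x⁻¹) atTop (𝓝 (1 + c * 0)) :=
    (tendsto_inv_atTop_zero.const_mul c).const_add 1
  rw [mul_zero, add_zero] at h
  refine h.congr' ?_
  filter_upwards [eventually_gt_atTop 0] with x hx
  field_simp

lemma gamma_ratio_unit (a : ℝ) (h0 : 0 ≤ a) (h1 : a < 1) :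
    Tendsto (fun x : ℝ => Real.Gamma (x + a) / (Real.Gamma x * x ^ a)) atTop (𝓝 1) := by
  rcases h0.eq_or_lt with rfl | h0
  · refine tendsto_const_nhds.congr' ?_
    filter_upwards [eventually_gt_atTop 0] with x hx
    have := (Real.Gamma_pos_of_pos hx).ne'
    simp [this]
  have hl : Tendsto (fun x : ℝ => ((x + a) / x) ^ (a - 1)) atTop (𝓝 1) := by
    have := (shift_div a).rpow_const (p := a - 1) (Or.inl one_ne_zero)
    simpa using this
  refine tendsto_of_tendsto_of_tendsto_of_le_of_le' hl tendsto_const_nhds ?_ ?_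
  · filter_upwards [eventually_gt_atTop 0] with x hx
    have hxa : 0 < x + a := by linarith
    have g := Real.Gamma_mul_add_mul_le_rpow_Gamma_mul_rpow_Gamma hxa
      (by linarith : 0 < x + a + 1) h0 (sub_pos.2 h1) (by ring)
    have e : a * (x + a) + (1 - a) * (x + a + 1) = x + 1 := by ring
    have G0 := Real.Gamma_pos_of_pos hx
    have G1 := Real.Gamma_pos_of_pos hxa
    rw [e, Real.Gamma_add_one hx.ne', Real.Gamma_add_one hxa.ne',
      Real.mul_rpow hxa.le G1.le, mul_left_comm, ← Real.rpow_add G1] at g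
    have e2 : a + (1 - a) = 1 := by ring
    rw [e2, Real.rpow_one] at g
    have p1 : 0 < x ^ a := Real.rpow_pos_of_pos hx _
    have p2 : 0 < (x + a) ^ (1 - a) := Real.rpow_pos_of_pos hxa _
    rw [le_div_iff₀ (by positivity), Real.div_rpow hxa.le hx.le,
      ← neg_sub 1 a, Real.rpow_neg hxa.le, Real.rpow_neg hx.le, Real.rpow_sub hx,
      Real.rpow_one]
    calc _ = (x * Real.Gamma x) / (x + a) ^ (1 - a) := by field_simp
      _ ≤ _ := by rw [div_le_iff₀ p2]; linarith
  · filter_upwards [eventually_gt_atTop 0] with x hx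
    have g := Real.Gamma_mul_add_mul_le_rpow_Gamma_mul_rpow_Gamma hx
      (by linarith : 0 < x + 1) (sub_pos.2 h1) h0 (by ring)
    have e : (1 - a) * x + a * (x + 1) = x + a := by ring
    have G0 := Real.Gamma_pos_of_pos hx
    rw [e, Real.Gamma_add_one hx.ne', Real.mul_rpow hx.le G0.le, mul_left_comm,
      ← Real.rpow_add G0] at g
    have e2 : 1 - a + a = 1 := by ring
    rw [e2, Real.rpow_one] at g
    have p1 : 0 < x ^ a := Real.rpow_pos_of_pos hx _
    rw [div_le_one (by positivity)]
    linarith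

lemma gamma_ratio_nat (a : ℝ) (h0 : 0 ≤ a) (h1 : a < 1) (n : ℕ) :
    Tendsto (fun x : ℝ => Real.Gamma (x + (a + n)) / (Real.Gamma x * x ^ (a + n)))
      atTop (𝓝 1) := by
  induction n with
  | zero => simpa using gamma_ratio_unit a h0 h1
  | succ n ih =>
    have h := (shift_div (a + n)).mul ih
    rw [one_mul] at h
    refine h.congr' ?_
    filter_upwards [eventually_gt_atTop 0] with x hx
    have hxa : 0 < x + (a + n) := by positivity
    have e : x + (a + (n + 1 : ℕ)) = x + (a + n) + 1 := by push_cast; ring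
    have e' : a + (n + 1 : ℕ) = (a + n) + 1 := by push_cast; ring
    rw [e, e', Real.Gamma_add_one hxa.ne', Real.rpow_add_one hx.ne']
    rw [div_mul_div_comm]
    congr 1
    ring

lemma gamma_ratio (a : ℝ) (h0 : 0 ≤ a) :
    Tendsto (fun x : ℝ => Real.Gamma (x + a) / (Real.Gamma x * x ^ a)) atTop (𝓝 1) := by
  have h := gamma_ratio_nat (Int.fract a) (Int.fract_nonneg a) (Int.fract_lt_one a) ⌊a⌋₊
  have e : Int.fract a + (⌊a⌋₊ : ℝ) = a := by
    rw [natCast_floor_eq_intCast_floor h0]; exact Int.fract_add_floor a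
  rwa [e] at h

lemma beta_asymp (a c : ℝ) (ha : 0 < a) :
    Tendsto (fun x : ℝ => betaB (x + c) a / (Real.Gamma a / x ^ a)) atTop (𝓝 1) := by
  have h1 := ((gamma_ratio a ha.le).comp (tendsto_atTop_add_const_right atTop c tendsto_id)).inv₀
    one_ne_zero
  have h2 := ((shift_div c).rpow_const (p := a) (Or.inl one_ne_zero)).inv₀ (by simp)
  have h := h1.mul h2
  simp only [inv_one, Real.one_rpow, mul_one] at h
  refine h.congr' ?_
  filter_upwards [eventually_gt_atTop 0, eventually_gt_atTop (-c)] with x hx hxc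
  have hp : 0 < x + c := by linarith
  have G := Real.Gamma_pos_of_pos ha
  have G1 := Real.Gamma_pos_of_pos hp
  have G2 := Real.Gamma_pos_of_pos (add_pos hp ha)
  have p1 := Real.rpow_pos_of_pos hx a
  have p2 := Real.rpow_pos_of_pos hp a
  rw [betaB_eq _ _ hp ha, Real.div_rpow hp.le hx.le]
  simp only [Function.comp, id]
  field_simp

theorem stmt1 (α β : ℝ) (hα : -1 < α) (hβ : -1 < β) :
    Tendsto
      (fun p : ℝ × ℝ =>
        Bfun α β p.1 p.2 /
          (Real.Gamma (α + 1) * Real.Gamma (β + 1) / ((p.1 + p.2) ^ (α + 1) * p.2 ^ (β + 1))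
            + Real.Gamma (α + β + 2) / ((β + 1) * p.1 ^ (α + β + 2))))
      (atTop ×ˢ atTop) (nhds 1) := by
  have ha : 0 < α + 1 := by linarith
  have hb : 0 < β + 1 := by linarith
  have hab : 0 < α + β + 2 := by linarith
  have t1 : Tendsto (fun p : ℝ × ℝ => p.1) (atTop ×ˢ atTop) atTop := tendsto_fst
  have t2 : Tendsto (fun p : ℝ × ℝ => p.2) (atTop ×ˢ atTop) atTop := tendsto_snd
  have k1 := (beta_asymp (α + 1) (β + 2) ha).comp (t1.atTop_add_atTop t2)
  have k2 := (beta_asymp (β + 1) 1 hb).comp t2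
  have k3 := (beta_asymp (α + β + 2) 1 hab).comp t1
  have k12 := k1.mul k2
  rw [one_mul] at k12
  have Ga := Real.Gamma_pos_of_pos ha
  have Gb := Real.Gamma_pos_of_pos hb
  have Gab := Real.Gamma_pos_of_pos hab
  rw [tendsto_order] at k12 k3 ⊢
  have key : ∀ᶠ p : ℝ × ℝ in atTop ×ˢ atTop, ∃ D E : ℝ, 0 < D ∧ 0 < E ∧
      Bfun α β p.1 p.2 /
          (Real.Gamma (α + 1) * Real.Gamma (β + 1) / ((p.1 + p.2) ^ (α + 1) * p.2 ^ (β + 1))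
            + Real.Gamma (α + β + 2) / ((β + 1) * p.1 ^ (α + β + 2)))
      = (((fun x : ℝ => betaB (x + (β + 2)) (α + 1) / (Real.Gamma (α + 1) / x ^ (α + 1))) ∘
          fun p : ℝ × ℝ => p.1 + p.2) p *
        ((fun x : ℝ => betaB (x + 1) (β + 1) / (Real.Gamma (β + 1) / x ^ (β + 1))) ∘
          fun p : ℝ × ℝ => p.2) p * D +
        ((fun x : ℝ => betaB (x + 1) (α + β + 2) / (Real.Gamma (α + β + 2) / x ^ (α + β + 2))) ∘
          fun p : ℝ × ℝ => p.1) p * E) / (D + E) := by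
    filter_upwards [t1.eventually_gt_atTop 0, t2.eventually_gt_atTop 0] with p h1 h2
    have p1 := Real.rpow_pos_of_pos (add_pos h1 h2) (α + 1)
    have p2 := Real.rpow_pos_of_pos h2 (β + 1)
    have p3 := Real.rpow_pos_of_pos h1 (α + β + 2)
    refine ⟨Real.Gamma (α + 1) * Real.Gamma (β + 1) / ((p.1 + p.2) ^ (α + 1) * p.2 ^ (β + 1)),
      Real.Gamma (α + β + 2) / ((β + 1) * p.1 ^ (α + β + 2)), by positivity, by positivity, ?_⟩
    congr 1
    rw [Bfun, betaB_comm' (β + 1) (p.2 + 1) hb (by linarith)]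
    simp only [Function.comp]
    rw [show p.1 + p.2 + β + 2 = p.1 + p.2 + (β + 2) by ring]
    field_simp
  constructor
  · intro b hb1
    filter_upwards [key, k12.1 b hb1, k3.1 b hb1] with p ⟨D, E, hD, hE, h⟩ q1 q2
    rw [h, lt_div_iff₀ (by positivity), mul_add]
    exact add_lt_add (mul_lt_mul_of_pos_right q1 hD) (mul_lt_mul_of_pos_right q2 hE)
  · intro b hb1
    filter_upwards [key, k12.2 b hb1, k3.2 b hb1] with p ⟨D, E, hD, hE, h⟩ q1 q2
    rw [h, div_lt_iff₀ (by positivity), mul_add]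
    exact add_lt_add (mul_lt_mul_of_pos_right q1 hD) (mul_lt_mul_of_pos_right q2 hE)
end

section
/- Let H ∈ (0,1) and let n ≥ 1 be an integer. Then 1 − 2n ∫₀¹ t^{n−1} R_H(t,1) dt + n² ∫₀¹ ∫₀¹ t^{n−1} s^{n−1} R_H(t,s) ds dt = ((n² + 2nH)/(2n + 2H)) · (Γ(2H+1)Γ(n)/Γ(n+2H+1)). -/
/-- The covariance function of fractional Brownian motion with Hurst parameter `H`:
`R_H(t,s) = (1/2)(t^{2H} + s^{2H} − |t−s|^{2H})`. -/
noncomputable def fbmCov (H t s : ℝ) : ℝ :=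
  (1/2) * (t ^ (2 * H) + s ^ (2 * H) - |t - s| ^ (2 * H))

lemma beta_scaled_aux (a : ℝ) (ha : 0 < a) (n : ℕ) (hn : 1 ≤ n) (t : ℝ) (ht : 0 < t) :
    ∫ s in (0:ℝ)..t, s ^ (n - 1) * (t - s) ^ a
      = t ^ ((n:ℝ) + a) * (Real.Gamma (a + 1) * Real.Gamma (n:ℝ) / Real.Gamma ((n:ℝ) + a + 1)) := by
  have hn' : (0:ℝ) < n := by exact_mod_cast hn
  have h1 := Complex.betaIntegral_scaled (n:ℂ) ((a:ℂ) + 1) ht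
  have h2 := Complex.Gamma_mul_Gamma_eq_betaIntegral (s := (n:ℂ)) (t := (a:ℂ) + 1)
    (by simpa using (by omega : 0 < n)) (by simp; linarith)
  have hG : Real.Gamma ((n:ℝ) + a + 1) ≠ 0 := (Real.Gamma_pos_of_pos (by linarith)).ne'
  have e1 : (n:ℂ) = ((n:ℝ):ℂ) := by simp
  have e2 : (a:ℂ) + 1 = ((a + 1 : ℝ):ℂ) := by simp
  have e3 : (n:ℂ) + ((a:ℂ) + 1) = ((n + a + 1 : ℝ):ℂ) := by push_cast; ring
  rw [e3, e1, e2, Complex.Gamma_ofReal, Complex.Gamma_ofReal, Complex.Gamma_ofReal] at h2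
  rw [e1, e2] at h1
  have hb : Complex.betaIntegral ((n:ℝ):ℂ) ((a + 1 : ℝ):ℂ)
      = ((Real.Gamma (a + 1) * Real.Gamma (n:ℝ) / Real.Gamma ((n:ℝ) + a + 1) : ℝ) : ℂ) := by
    have hG' : (Real.Gamma ((n:ℝ) + a + 1) : ℂ) ≠ 0 := by exact_mod_cast hG
    rw [Complex.ofReal_div, Complex.ofReal_mul, eq_div_iff hG']
    linear_combination -h2
  rw [hb] at h1
  have e4 : ((n:ℝ):ℂ) + ((a + 1 : ℝ):ℂ) - 1 = ((n + a : ℝ):ℂ) := by push_cast; ring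
  rw [e4, ← Complex.ofReal_cpow ht.le, ← Complex.ofReal_mul] at h1
  have h3 : ((∫ s in (0:ℝ)..t, s ^ (n - 1) * (t - s) ^ a : ℝ) : ℂ)
      = ∫ x in (0:ℝ)..t, (x:ℂ) ^ (((n:ℝ):ℂ) - 1) * ((t:ℂ) - x) ^ (((a + 1 : ℝ):ℂ) - 1) := by
    rw [← intervalIntegral.integral_ofReal]
    apply intervalIntegral.integral_congr
    intro x hx
    rw [Set.uIcc_of_le ht.le] at hx
    have e5 : ((n:ℝ):ℂ) - 1 = ((n - 1 : ℕ):ℂ) := by push_cast [Nat.cast_sub hn]; ring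
    have e6 : ((a + 1 : ℝ):ℂ) - 1 = (a:ℂ) := by push_cast; ring
    simp only
    rw [e5, e6, Complex.cpow_natCast, Complex.ofReal_mul, Complex.ofReal_pow,
      Complex.ofReal_cpow (by linarith [hx.2]), Complex.ofReal_sub]
  rw [h1] at h3
  exact_mod_cast h3

lemma pow_int_aux (a : ℝ) (ha : 0 < a) (n : ℕ) (hn : 1 ≤ n) :
    ∫ s in (0:ℝ)..1, s ^ (n - 1) * s ^ a = 1 / ((n:ℝ) + a) := by
  have hn' : (1:ℝ) ≤ n := by exact_mod_cast hn
  have : ∫ s in (0:ℝ)..1, s ^ (n - 1) * s ^ a = ∫ s in (0:ℝ)..1, s ^ ((n:ℝ) - 1 + a) := by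
    apply intervalIntegral.integral_congr
    intro x hx
    rw [Set.uIcc_of_le zero_le_one] at hx
    simp only
    rw [Real.rpow_add_of_nonneg hx.1 (by linarith) ha.le, ← Real.rpow_natCast, Nat.cast_sub hn]
    simp
  rw [this, integral_rpow (Or.inl (by linarith)), Real.one_rpow, Real.zero_rpow (by linarith)]
  ring_nf

lemma pow_int_aux' (n : ℕ) (hn : 1 ≤ n) : ∫ s in (0:ℝ)..1, s ^ (n - 1) = 1 / (n:ℝ) := by
  rw [integral_pow, Nat.cast_sub hn]
  simp [show n - 1 + 1 = n by omega, show n ≠ 0 by omega]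

lemma double_aux (a : ℝ) (ha : 0 < a) (n : ℕ) (hn : 1 ≤ n) :
    ∫ t in (0:ℝ)..1, ∫ s in (0:ℝ)..1, t ^ (n - 1) * s ^ (n - 1) * |t - s| ^ a
      = 2 * (Real.Gamma (a + 1) * Real.Gamma (n:ℝ) / Real.Gamma ((n:ℝ) + a + 1))
        / (2 * n + a) := by
  set B := Real.Gamma (a + 1) * Real.Gamma (n:ℝ) / Real.Gamma ((n:ℝ) + a + 1) with hB
  have hn' : (1:ℝ) ≤ n := by exact_mod_cast hn
  let p : ℝ → ℝ → ℝ := fun t s => t ^ (n - 1) * s ^ (n - 1) * (max (t - s) 0) ^ a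
  have hp : Continuous (Function.uncurry p) := by
    have : Continuous fun x : ℝ × ℝ => (max (x.1 - x.2) 0) ^ a :=
      (by fun_prop : Continuous fun x : ℝ × ℝ => max (x.1 - x.2) 0).rpow_const
        (fun _ => Or.inr ha.le)
    exact (by fun_prop : Continuous fun x : ℝ × ℝ => x.1 ^ (n - 1) * x.2 ^ (n - 1)).mul this
  have hp1 : ∀ t, Continuous (p t) := fun t => hp.comp (by fun_prop : Continuous fun s => (t, s))
  have hp2 : ∀ t, Continuous (fun s => p s t) :=
    fun t => hp.comp (by fun_prop : Continuous fun s => (s, t))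
  have hsplit : ∀ t s, t ^ (n - 1) * s ^ (n - 1) * |t - s| ^ a = p t s + p s t := by
    intro t s
    simp only [p]
    rcases le_total s t with h | h
    · rw [max_eq_left (by linarith), max_eq_right (by linarith), abs_of_nonneg (by linarith),
        Real.zero_rpow ha.ne']; ring
    · rw [max_eq_right (by linarith), max_eq_left (by linarith), abs_of_nonpos (by linarith),
        Real.zero_rpow ha.ne', neg_sub]; ring
  have hc1 : Continuous fun t => ∫ s in (0:ℝ)..1, p t s :=
    intervalIntegral.continuous_parametric_intervalIntegral_of_continuous' hp 0 1
  have hc2 : Continuous fun t => ∫ s in (0:ℝ)..1, p s t :=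
    intervalIntegral.continuous_parametric_intervalIntegral_of_continuous'
      (f := fun t s => p s t) (hp.comp continuous_swap) 0 1
  have hswap : ∫ t in (0:ℝ)..1, ∫ s in (0:ℝ)..1, p s t = ∫ t in (0:ℝ)..1, ∫ s in (0:ℝ)..1, p t s := by
    apply MeasureTheory.intervalIntegral_intervalIntegral_swap
    have hi : MeasureTheory.IntegrableOn (Function.uncurry fun t s => p s t)
        (Set.Icc (0:ℝ) 1 ×ˢ Set.Icc (0:ℝ) 1) :=
      (hp.comp continuous_swap).continuousOn.integrableOn_compact (isCompact_Icc.prod isCompact_Icc)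
    refine hi.mono_set ?_
    rw [Set.uIoc_of_le zero_le_one]
    exact Set.prod_mono Set.Ioc_subset_Icc_self Set.Ioc_subset_Icc_self
  have hin : ∀ t ∈ Set.uIcc (0:ℝ) 1, ∫ s in (0:ℝ)..1, p t s = B * t ^ (2 * (n:ℝ) + a - 1) := by
    intro t ht
    rw [Set.uIcc_of_le zero_le_one] at ht
    have hz : ∫ s in t..1, p t s = 0 := by
      rw [intervalIntegral.integral_congr (g := fun _ => (0:ℝ)), intervalIntegral.integral_zero]
      intro s hs
      rw [Set.uIcc_of_le ht.2] at hs
      simp only [p]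
      rw [max_eq_right (by linarith [hs.1]), Real.zero_rpow ha.ne', mul_zero]
    rw [← intervalIntegral.integral_add_adjacent_intervals
      ((hp1 t).intervalIntegrable 0 t) ((hp1 t).intervalIntegrable t 1), hz, add_zero]
    rcases ht.1.eq_or_lt with h | h
    · rw [← h, intervalIntegral.integral_same, Real.zero_rpow (by linarith), mul_zero]
    have : ∫ s in (0:ℝ)..t, p t s = ∫ s in (0:ℝ)..t, t ^ (n - 1) * (s ^ (n - 1) * (t - s) ^ a) := by
      apply intervalIntegral.integral_congr
      intro s hs
      rw [Set.uIcc_of_le ht.1] at hs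
      simp only [p]
      rw [max_eq_left (by linarith [hs.2]), mul_assoc]
    rw [this, intervalIntegral.integral_const_mul, beta_scaled_aux a ha n hn t h, ← hB,
      ← Real.rpow_natCast, Nat.cast_sub hn, ← mul_assoc, ← Real.rpow_add h, mul_comm]
    congr 2
    push_cast; ring
  simp_rw [hsplit]
  have : ∀ t, ∫ s in (0:ℝ)..1, (p t s + p s t)
      = (∫ s in (0:ℝ)..1, p t s) + ∫ s in (0:ℝ)..1, p s t := fun t =>
    intervalIntegral.integral_add ((hp1 t).intervalIntegrable _ _) ((hp2 t).intervalIntegrable _ _)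
  simp_rw [this]
  rw [intervalIntegral.integral_add (hc1.intervalIntegrable _ _) (hc2.intervalIntegrable _ _),
    hswap, intervalIntegral.integral_congr hin, intervalIntegral.integral_const_mul,
    integral_rpow (Or.inl (by linarith)), Real.one_rpow, Real.zero_rpow (by linarith)]
  ring_nf

theorem stmt5 (H : ℝ) (hH : H ∈ Set.Ioo (0:ℝ) 1) (n : ℕ) (hn : 1 ≤ n) :
    1 - 2 * (n:ℝ) * (∫ t in (0:ℝ)..1, t ^ (n - 1) * fbmCov H t 1)
      + (n:ℝ) ^ 2 * ∫ t in (0:ℝ)..1, ∫ s in (0:ℝ)..1, t ^ (n - 1) * s ^ (n - 1) * fbmCov H t s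
      = (((n:ℝ) ^ 2 + 2 * (n:ℝ) * H) / (2 * (n:ℝ) + 2 * H))
          * (Real.Gamma (2 * H + 1) * Real.Gamma (n:ℝ) / Real.Gamma ((n:ℝ) + 2 * H + 1)) := by
  have ha : 0 < 2 * H := by linarith [hH.1]
  have hn' : (1:ℝ) ≤ n := by exact_mod_cast hn
  have hD := double_aux (2 * H) ha n hn
  have hS := beta_scaled_aux (2 * H) ha n hn 1 one_pos
  rw [Real.one_rpow, one_mul] at hS
  have hP := pow_int_aux (2 * H) ha n hn
  have hQ := pow_int_aux' n hn
  simp only [fbmCov]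
  set a := 2 * H with hadef
  set B := Real.Gamma (a + 1) * Real.Gamma (n:ℝ) / Real.Gamma ((n:ℝ) + a + 1) with hB
  have c0 : Continuous fun t : ℝ => t ^ (n - 1) := by fun_prop
  have c1 : Continuous fun t : ℝ => t ^ a := Real.continuous_rpow_const ha.le
  have c2 : Continuous fun x : ℝ × ℝ => |x.1 - x.2| ^ a :=
    (by fun_prop : Continuous fun x : ℝ × ℝ => |x.1 - x.2|).rpow_const (fun _ => Or.inr ha.le)
  have c3 : Continuous fun t : ℝ => (1 - t) ^ a :=
    (by fun_prop : Continuous fun t : ℝ => 1 - t).rpow_const (fun _ => Or.inr ha.le)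
  have c2' : ∀ t : ℝ, Continuous fun s : ℝ => |t - s| ^ a := fun t =>
    c2.comp (by fun_prop : Continuous fun s : ℝ => (t, s))
  have h1 : ∫ t in (0:ℝ)..1, t ^ (n - 1) * (1 / 2 * (t ^ a + 1 ^ a - |t - 1| ^ a))
      = 1 / 2 * (1 / (n + a) + 1 / n - B) := by
    rw [← hP, ← hQ, ← hS, ← intervalIntegral.integral_add
      ((c0.fun_mul c1).intervalIntegrable _ _) (c0.intervalIntegrable _ _),
      ← intervalIntegral.integral_sub (((c0.fun_mul c1).fun_add c0).intervalIntegrable _ _)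
      ((c0.fun_mul c3).intervalIntegrable _ _), ← intervalIntegral.integral_const_mul]
    apply intervalIntegral.integral_congr
    intro t ht
    rw [Set.uIcc_of_le zero_le_one] at ht
    simp only
    rw [abs_of_nonpos (by linarith [ht.2]), neg_sub, Real.one_rpow]
    ring
  have h2 : ∀ t : ℝ, ∫ s in (0:ℝ)..1, t ^ (n - 1) * s ^ (n - 1) * (1 / 2 * (t ^ a + s ^ a - |t - s| ^ a))
      = 1 / 2 * (t ^ (n - 1) * t ^ a * (1 / n) + t ^ (n - 1) * (1 / (n + a))
        - ∫ s in (0:ℝ)..1, t ^ (n - 1) * s ^ (n - 1) * |t - s| ^ a) := by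
    intro t
    rw [← hP, ← hQ, ← intervalIntegral.integral_const_mul, ← intervalIntegral.integral_const_mul,
      ← intervalIntegral.integral_add ((continuous_const.fun_mul c0).intervalIntegrable _ _)
        ((continuous_const.fun_mul (c0.fun_mul c1)).intervalIntegrable _ _),
      ← intervalIntegral.integral_sub
        (((continuous_const.fun_mul c0).fun_add (continuous_const.fun_mul (c0.fun_mul c1))).intervalIntegrable _ _)
        (((continuous_const.fun_mul c0).fun_mul (c2' t)).intervalIntegrable _ _),
      ← intervalIntegral.integral_const_mul]
    congr 1
    ext s
    ring
  have c4 : Continuous fun t : ℝ => ∫ s in (0:ℝ)..1, t ^ (n - 1) * s ^ (n - 1) * |t - s| ^ a :=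
    intervalIntegral.continuous_parametric_intervalIntegral_of_continuous'
      ((by fun_prop : Continuous fun x : ℝ × ℝ => x.1 ^ (n - 1) * x.2 ^ (n - 1)).fun_mul c2) 0 1
  have h3 : ∫ t in (0:ℝ)..1, ∫ s in (0:ℝ)..1,
      t ^ (n - 1) * s ^ (n - 1) * (1 / 2 * (t ^ a + s ^ a - |t - s| ^ a))
      = 1 / 2 * (1 / (n + a) * (1 / n) + 1 / n * (1 / (n + a)) - 2 * B / (2 * n + a)) := by
    simp_rw [h2]
    rw [intervalIntegral.integral_const_mul, intervalIntegral.integral_sub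
      ((((c0.fun_mul c1).fun_mul continuous_const).fun_add (c0.fun_mul continuous_const)).intervalIntegrable _ _)
      (c4.intervalIntegrable _ _), intervalIntegral.integral_add
      (((c0.fun_mul c1).fun_mul continuous_const).intervalIntegrable _ _)
      ((c0.fun_mul continuous_const).intervalIntegrable _ _), intervalIntegral.integral_mul_const,
      intervalIntegral.integral_mul_const, hP, hQ, hD]
  rw [h1, h3]
  have n1 : (n:ℝ) ≠ 0 := by linarith
  have n2 : (n:ℝ) + a ≠ 0 := by linarith
  have n3 : 2 * (n:ℝ) + a ≠ 0 := by linarith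
  have hH2 : 2 * (n:ℝ) * H = n * a := by rw [hadef]; ring
  rw [hH2]
  clear_value B a
  field_simp
  ring
end

section
/- Let H ∈ (0,1) and let n ≥ 1 be an integer. Then ∫₀¹ ∫₀¹ t^{n−1} s^{n−1} |t−s|^{2H} ds dt = (1/(n+H)) · (Γ(2H+1)Γ(n)/Γ(n+2H+1)). -/
open MeasureTheory in
lemma aux_beta (m : ℕ) (p : ℝ) (hp : 0 < p) :
    (∫ u in (0:ℝ)..1, u ^ m * (1 - u) ^ p)
      = Real.Gamma ((m:ℝ) + 1) * Real.Gamma (p + 1) / Real.Gamma ((m:ℝ) + 1 + (p + 1)) := by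
  have h := ProbabilityTheory.beta_eq_betaIntegralReal ((m:ℝ) + 1) (p + 1) (by positivity)
    (by positivity)
  rw [ProbabilityTheory.beta] at h
  rw [h, Complex.betaIntegral]
  have h2 : (∫ x in (0:ℝ)..1, (x:ℂ) ^ ((((m:ℝ) + 1 : ℝ) : ℂ) - 1) *
      (1 - (x:ℂ)) ^ (((p + 1 : ℝ) : ℂ) - 1))
      = ∫ x in (0:ℝ)..1, ((x ^ m * (1 - x) ^ p : ℝ) : ℂ) := by
    apply intervalIntegral.integral_congr
    intro x hx
    rw [Set.uIcc_of_le zero_le_one] at hx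
    have e1 : ((((m:ℝ) + 1 : ℝ) : ℂ) - 1) = (m : ℂ) := by push_cast; ring
    have e2 : (((p + 1 : ℝ) : ℂ) - 1) = (p : ℂ) := by push_cast; ring
    simp only [e1, e2, Complex.cpow_natCast]
    rw [Complex.ofReal_mul, Complex.ofReal_cpow (by linarith [hx.2])]
    push_cast
    rfl
  rw [h2, intervalIntegral.integral_ofReal, Complex.ofReal_re]

lemma aux_inner (m : ℕ) (p : ℝ) (hp : 0 < p) (t : ℝ) (ht : t ∈ Set.Icc (0:ℝ) 1) :
    (∫ s in (0:ℝ)..1, t ^ m * s ^ m * (max (t - s) 0) ^ p)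
      = t ^ ((2 * m + 1 : ℝ) + p) * ∫ u in (0:ℝ)..1, u ^ m * (1 - u) ^ p := by
  have hc : Continuous (fun s : ℝ => t ^ m * s ^ m * (max (t - s) 0) ^ p) := by
    have : Continuous (fun s : ℝ => (max (t - s) 0) ^ p) :=
      (Real.continuous_rpow_const hp.le).comp (by fun_prop)
    fun_prop
  rw [← intervalIntegral.integral_add_adjacent_intervals (b := t)
    (hc.intervalIntegrable _ _) (hc.intervalIntegrable _ _)]
  have z : (∫ s in t..1, t ^ m * s ^ m * (max (t - s) 0) ^ p) = 0 := by
    rw [intervalIntegral.integral_congr (g := fun _ => (0:ℝ))]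
    · simp
    · intro s hs
      rw [Set.uIcc_of_le ht.2] at hs
      simp only
      rw [max_eq_right (by linarith [hs.1]), Real.zero_rpow hp.ne', mul_zero]
  rw [z, add_zero]
  have k := intervalIntegral.mul_integral_comp_mul_left (a := 0) (b := 1)
    (f := fun s : ℝ => t ^ m * s ^ m * (max (t - s) 0) ^ p) t
  simp only [mul_zero, mul_one] at k
  rw [← k, ← intervalIntegral.integral_const_mul, ← intervalIntegral.integral_const_mul]
  apply intervalIntegral.integral_congr
  intro u hu
  rw [Set.uIcc_of_le zero_le_one] at hu
  have h1 : 0 ≤ 1 - u := by linarith [hu.2]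
  have e : t - t * u = t * (1 - u) := by ring
  simp only
  rw [e, max_eq_left (mul_nonneg ht.1 h1), Real.mul_rpow ht.1 h1]
  have e3 : t ^ ((2 * m + 1 : ℝ) + p) = t ^ (2 * m + 1) * t ^ p := by
    rw [Real.rpow_add_of_nonneg ht.1 (by positivity) hp.le, ← Real.rpow_natCast]
    push_cast
    rfl
  rw [e3]
  ring

/-- For `H ∈ (0,1)` and an integer `n ≥ 1`,
`∫₀¹∫₀¹ t^{n−1}s^{n−1}|t−s|^{2H} ds dt = (1/(n+H))·Γ(2H+1)Γ(n)/Γ(n+2H+1)`. -/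
theorem stmt6 (H : ℝ) (hH : H ∈ Set.Ioo (0:ℝ) 1) (n : ℕ) (hn : 1 ≤ n) :
    (∫ t in (0:ℝ)..1, ∫ s in (0:ℝ)..1, t ^ (n - 1) * s ^ (n - 1) * |t - s| ^ (2 * H))
      = (1 / ((n:ℝ) + H))
          * (Real.Gamma (2 * H + 1) * Real.Gamma (n:ℝ) / Real.Gamma ((n:ℝ) + 2 * H + 1)) := by
  obtain ⟨m, rfl⟩ : ∃ m, n = m + 1 := ⟨n - 1, by omega⟩
  have hH0 := hH.1
  have hp : 0 < 2 * H := by linarith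
  simp only [Nat.add_sub_cancel]
  set p := 2 * H with hpdef
  let g : ℝ → ℝ → ℝ := fun t s => t ^ m * s ^ m * (max (t - s) 0) ^ p
  have hg : Continuous (Function.uncurry g) := by
    have : Continuous (fun x : ℝ × ℝ => (max (x.1 - x.2) 0) ^ p) :=
      (Real.continuous_rpow_const hp.le).comp (by fun_prop)
    change Continuous (fun x : ℝ × ℝ => x.1 ^ m * x.2 ^ m * (max (x.1 - x.2) 0) ^ p)
    fun_prop
  have hg' : Continuous (Function.uncurry (fun t s => g s t)) := hg.comp continuous_swap
  have split : ∀ t s : ℝ, t ^ m * s ^ m * |t - s| ^ p = g t s + g s t := by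
    intro t s
    simp only [g]
    rcases le_total s t with h | h
    · rw [abs_of_nonneg (by linarith), max_eq_left (by linarith : (0:ℝ) ≤ t - s),
        max_eq_right (by linarith : s - t ≤ 0), Real.zero_rpow hp.ne']
      ring
    · rw [abs_of_nonpos (by linarith), max_eq_right (by linarith : t - s ≤ 0),
        max_eq_left (by linarith : (0:ℝ) ≤ s - t), Real.zero_rpow hp.ne', neg_sub]
      ring
  simp only [split]
  have i1 : ∀ t, (∫ s in (0:ℝ)..1, (g t s + g s t))
      = (∫ s in (0:ℝ)..1, g t s) + ∫ s in (0:ℝ)..1, g s t := by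
    intro t
    exact intervalIntegral.integral_add
      ((hg.comp (by fun_prop : Continuous fun s : ℝ => (t, s))).intervalIntegrable _ _)
      ((hg.comp (by fun_prop : Continuous fun s : ℝ => (s, t))).intervalIntegrable _ _)
  simp only [i1]
  have swap : (∫ t in (0:ℝ)..1, ∫ s in (0:ℝ)..1, g s t)
      = ∫ t in (0:ℝ)..1, ∫ s in (0:ℝ)..1, g t s := by
    apply MeasureTheory.intervalIntegral_intervalIntegral_swap
    apply (hg'.continuousOn.integrableOn_compact
      ((isCompact_Icc (a := (0:ℝ)) (b := 1)).prod (isCompact_Icc (a := (0:ℝ)) (b := 1)))).mono_set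
    rw [Set.uIoc_of_le zero_le_one]
    exact Set.prod_mono Set.Ioc_subset_Icc_self Set.Ioc_subset_Icc_self
  rw [intervalIntegral.integral_add
    ((intervalIntegral.continuous_parametric_intervalIntegral_of_continuous' hg 0 1).intervalIntegrable
      _ _)
    ((intervalIntegral.continuous_parametric_intervalIntegral_of_continuous' hg' 0 1).intervalIntegrable
      _ _), swap]
  have main : (∫ t in (0:ℝ)..1, ∫ s in (0:ℝ)..1, g t s)
      = ∫ t in (0:ℝ)..1, t ^ ((2 * m + 1 : ℝ) + p) * ∫ u in (0:ℝ)..1, u ^ m * (1 - u) ^ p := by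
    apply intervalIntegral.integral_congr
    intro t ht
    rw [Set.uIcc_of_le zero_le_one] at ht
    exact aux_inner m p hp t ht
  have hm : (0:ℝ) ≤ m := by positivity
  rw [main, intervalIntegral.integral_mul_const, aux_beta m p hp,
    integral_rpow (Or.inl (by linarith)), Real.one_rpow, Real.zero_rpow (by linarith)]
  have e : ((m + 1 : ℕ) : ℝ) + p + 1 = (m:ℝ) + 1 + (p + 1) := by push_cast; ring
  have e' : ((m + 1 : ℕ) : ℝ) = (m:ℝ) + 1 := by push_cast; ring
  rw [e, e']
  have e4 : (2 * m + 1 : ℝ) + p + 1 = 2 * ((m:ℝ) + 1 + H) := by rw [hpdef]; ring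
  rw [e4]
  have : (m:ℝ) + 1 + H ≠ 0 := by positivity
  field_simp
  ring
end

section
/- Let H ∈ (0,1). There exists a constant C_H depending only on H such that for every integer n ≥ 1, Σ_{j=1}^n Σ_{k=1}^n |β_{j,k}| ≤ C_H · n^{max(1−2H, 0)}. -/
/-- The fBm autocorrelation sequence `ρ_H(k) = (1/2)(|k+1|^{2H} − 2|k|^{2H} + |k−1|^{2H})`. -/
noncomputable def rhoH (H : ℝ) (k : ℤ) : ℝ :=
  (1/2) * (|(k:ℝ) + 1| ^ (2 * H) - 2 * |(k:ℝ)| ^ (2 * H) + |(k:ℝ) - 1| ^ (2 * H))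

lemma rhoH_neg (H : ℝ) (k : ℤ) : rhoH H (-k) = rhoH H k := by
  unfold rhoH
  push_cast
  rw [show -(k:ℝ) + 1 = -((k:ℝ) - 1) by ring, show -(k:ℝ) - 1 = -((k:ℝ) + 1) by ring,
    abs_neg, abs_neg, abs_neg]
  ring

lemma rhoH_zero (H : ℝ) (hH : 0 < H) : rhoH H 0 = 1 := by
  unfold rhoH
  have : (2 * H) ≠ 0 := by positivity
  simp [Real.zero_rpow this]
  norm_num

lemma rhoH_nonneg_pos (H : ℝ) (h : 1 ≤ 2 * H) (k : ℤ) (hk : 1 ≤ k) : 0 ≤ rhoH H k := by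
  have hk' : (1:ℝ) ≤ k := by exact_mod_cast hk
  have hx : (k:ℝ) + 1 ∈ Set.Ici (0:ℝ) := Set.mem_Ici.2 (by linarith)
  have hy : (k:ℝ) - 1 ∈ Set.Ici (0:ℝ) := Set.mem_Ici.2 (by linarith)
  have h1 := (convexOn_rpow h).2 hx hy
    (by norm_num : (0:ℝ) ≤ 1/2) (by norm_num : (0:ℝ) ≤ 1/2) (by norm_num)
  simp only [smul_eq_mul] at h1
  rw [show 1 / 2 * ((k:ℝ) + 1) + 1 / 2 * ((k:ℝ) - 1) = k by ring] at h1
  unfold rhoH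
  rw [abs_of_nonneg (by linarith : (0:ℝ) ≤ k + 1), abs_of_nonneg (by linarith : (0:ℝ) ≤ k),
    abs_of_nonneg (by linarith : (0:ℝ) ≤ k - 1)]
  linarith

lemma rhoH_nonpos_pos (H : ℝ) (h0 : 0 ≤ 2 * H) (h : 2 * H ≤ 1) (k : ℤ) (hk : 1 ≤ k) :
    rhoH H k ≤ 0 := by
  have hk' : (1:ℝ) ≤ k := by exact_mod_cast hk
  have hx : (k:ℝ) + 1 ∈ Set.Ici (0:ℝ) := Set.mem_Ici.2 (by linarith)
  have hy : (k:ℝ) - 1 ∈ Set.Ici (0:ℝ) := Set.mem_Ici.2 (by linarith)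
  have h1 := (Real.concaveOn_rpow h0 h).2 hx hy
    (by norm_num : (0:ℝ) ≤ 1/2) (by norm_num : (0:ℝ) ≤ 1/2) (by norm_num)
  simp only [smul_eq_mul] at h1
  rw [show 1 / 2 * ((k:ℝ) + 1) + 1 / 2 * ((k:ℝ) - 1) = k by ring] at h1
  unfold rhoH
  rw [abs_of_nonneg (by linarith : (0:ℝ) ≤ k + 1), abs_of_nonneg (by linarith : (0:ℝ) ≤ k),
    abs_of_nonneg (by linarith : (0:ℝ) ≤ k - 1)]
  linarith

lemma abs_rhoH_convex (H : ℝ) (h : 1 ≤ 2 * H) (k : ℤ) : |rhoH H k| = rhoH H k := by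
  apply abs_of_nonneg
  rcases lt_trichotomy k 0 with hk | hk | hk
  · rw [← rhoH_neg]; exact rhoH_nonneg_pos H h _ (by omega)
  · rw [hk, rhoH_zero H (by linarith)]; norm_num
  · exact rhoH_nonneg_pos H h _ (by omega)

lemma abs_rhoH_concave (H : ℝ) (h0 : 0 < H) (h : 2 * H ≤ 1) (k : ℤ) :
    |rhoH H k| = - rhoH H k + if k = 0 then 2 else 0 := by
  rcases lt_trichotomy k 0 with hk | hk | hk
  · rw [if_neg hk.ne, add_zero]
    apply abs_of_nonpos
    rw [← rhoH_neg]; exact rhoH_nonpos_pos H (by linarith) h _ (by omega)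
  · rw [hk, rhoH_zero H h0]; norm_num
  · rw [if_neg hk.ne', add_zero]
    apply abs_of_nonpos
    exact rhoH_nonpos_pos H (by linarith) h _ (by omega)

lemma rhoH_inner_sum (H : ℝ) (x : ℤ) (n : ℕ) :
    ∑ k ∈ Finset.Icc 1 n, rhoH H (x - (k:ℤ)) =
      (1/2) * (|(x:ℝ) - n - 1| ^ (2 * H) - |(x:ℝ) - n| ^ (2 * H)
        - |(x:ℝ) - 1| ^ (2 * H) + |(x:ℝ)| ^ (2 * H)) := by
  induction n with
  | zero => simp
  | succ n ih =>
    rw [Finset.sum_Icc_succ_top (by omega), ih]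
    unfold rhoH
    push_cast
    rw [show (x:ℝ) - (n + 1) + 1 = x - n by ring, show (x:ℝ) - (n + 1) = x - n - 1 by ring]
    ring

lemma tele1 (H : ℝ) (h0 : 0 < H) (m : ℕ) :
    ∑ j ∈ Finset.Icc 1 m, (|(j:ℝ)| ^ (2 * H) - |(j:ℝ) - 1| ^ (2 * H)) = (m:ℝ) ^ (2 * H) := by
  have : (2 * H) ≠ 0 := by positivity
  induction m with
  | zero => simp [Real.zero_rpow this]
  | succ n ih =>
    rw [Finset.sum_Icc_succ_top (by omega), ih]
    push_cast
    rw [add_sub_cancel_right, Nat.abs_cast, abs_of_nonneg (by positivity : (0:ℝ) ≤ n + 1)]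
    ring

lemma tele2 (H : ℝ) (n : ℕ) (m : ℕ) :
    ∑ j ∈ Finset.Icc 1 m, (|(j:ℝ) - n - 1| ^ (2 * H) - |(j:ℝ) - n| ^ (2 * H))
      = |(n:ℝ)| ^ (2 * H) - |(m:ℝ) - n| ^ (2 * H) := by
  induction m with
  | zero => simp
  | succ k ih =>
    rw [Finset.sum_Icc_succ_top (by omega), ih]
    push_cast
    rw [show (k:ℝ) + 1 - n - 1 = k - n by ring]
    ring

lemma double_sum (H : ℝ) (h0 : 0 < H) (n : ℕ) :
    ∑ j ∈ Finset.Icc 1 n, ∑ k ∈ Finset.Icc 1 n, rhoH H ((j:ℤ) - (k:ℤ)) = (n:ℝ) ^ (2 * H) := by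
  have : (2 * H) ≠ 0 := by positivity
  have h1 := tele1 H h0 n
  have h2 := tele2 H n n
  rw [sub_self, abs_zero, Real.zero_rpow this, sub_zero, Nat.abs_cast] at h2
  simp_rw [rhoH_inner_sum]
  rw [← Finset.mul_sum]
  have : ∀ j : ℕ, (|(((j:ℤ)):ℝ) - n - 1| ^ (2 * H) - |((j:ℤ):ℝ) - n| ^ (2 * H)
        - |((j:ℤ):ℝ) - 1| ^ (2 * H) + |((j:ℤ):ℝ)| ^ (2 * H)) =
      (|(j:ℝ) - n - 1| ^ (2 * H) - |(j:ℝ) - n| ^ (2 * H)) +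
        (|(j:ℝ)| ^ (2 * H) - |(j:ℝ) - 1| ^ (2 * H)) := by
    intro j; push_cast; ring
  rw [Finset.sum_congr rfl (fun j _ => this j), Finset.sum_add_distrib, h1, h2]
  ring

theorem stmt9 (H : ℝ) (hH : H ∈ Set.Ioo (0:ℝ) 1) :
    ∃ C : ℝ, 0 < C ∧ ∀ n : ℕ, 1 ≤ n →
      (∑ j ∈ Finset.Icc 1 n, ∑ k ∈ Finset.Icc 1 n,
          |(n:ℝ) ^ (-(2 * H)) * rhoH H ((j:ℤ) - (k:ℤ))|)
        ≤ C * (n:ℝ) ^ (max (1 - 2 * H) 0) := by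
  obtain ⟨h0, -⟩ := hH
  refine ⟨2, by norm_num, fun n hn => ?_⟩
  have hn' : (0:ℝ) < n := by exact_mod_cast hn
  have hp : (0:ℝ) < (n:ℝ) ^ (-(2 * H)) := Real.rpow_pos_of_pos hn' _
  have hD := double_sum H h0 n
  simp_rw [abs_mul, abs_of_pos hp, ← Finset.mul_sum]
  rcases le_total 1 (2 * H) with h | h
  · simp_rw [abs_rhoH_convex H h]
    rw [hD, ← Real.rpow_add hn', max_eq_right (by linarith)]
    simp
  · simp_rw [abs_rhoH_concave H h0 h, Finset.sum_add_distrib, Finset.sum_neg_distrib]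
    rw [hD, max_eq_left (by linarith)]
    have h3 : ∑ j ∈ Finset.Icc 1 n, ∑ k ∈ Finset.Icc 1 n,
        (if (j:ℤ) - (k:ℤ) = 0 then (2:ℝ) else 0) = 2 * n := by
      have : ∀ j ∈ Finset.Icc 1 n, ∑ k ∈ Finset.Icc 1 n,
        (if (j:ℤ) - (k:ℤ) = 0 then (2:ℝ) else 0) = 2 := by
        intro j hj
        simp_rw [sub_eq_zero, Nat.cast_inj]
        rw [Finset.sum_ite_eq, if_pos hj]
      rw [Finset.sum_congr rfl this]
      simp [mul_comm]
    rw [h3]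
    have h4 : (n:ℝ) ^ (1 - 2 * H) = (n:ℝ) ^ (-(2 * H)) * n := by
      rw [sub_eq_neg_add, Real.rpow_add hn', Real.rpow_one]
    rw [h4]
    have h5 : (0:ℝ) ≤ (n:ℝ) ^ (2 * H) := by positivity
    nlinarith [mul_nonneg hp.le h5]
end

section
/- Let H ∈ (1/2, 1). Then lim_{n→∞} 2H²(2H−1)² n^{6H} ∫_{[0,1]⁴} s₁ⁿ t₁ⁿ s₂ⁿ t₂ⁿ · ( (1−t₁)^{2H} + (1−t₂)^{2H} − |t₁−t₂|^{2H} ) · |t₁−s₁|^{2H−2} |t₂−s₂|^{2H−2} ds₁ ds₂ dt₁ dt₂ = σ²_{H,1}, where σ²_{H,1} = 2H²(2H−1)² ∫_{[0,1]⁴} |log y₁ − log x₁|^{2H−2} |log y₂ − log x₂|^{2H−2} · ( |log y₁|^{2H} + |log y₂|^{2H} − |log y₁ − log y₂|^{2H} ) dx₁ dx₂ dy₁ dy₂. -/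
open Filter
open MeasureTheory Set Topology

lemma cov (n : ℝ) (hn : 0 < n) (f : ℝ → ℝ) :
    ∫ s in (0:ℝ)..1, f s = ∫ u in Ioi (0:ℝ), (Real.exp (-u / n) / n) * f (Real.exp (-u / n)) := by
  have himg : (fun u : ℝ => Real.exp (-u / n)) '' Ioi 0 = Ioo 0 1 := by
    ext x
    simp only [mem_image, mem_Ioi, mem_Ioo]
    constructor
    · rintro ⟨u, hu, rfl⟩
      refine ⟨Real.exp_pos _, ?_⟩
      rw [Real.exp_lt_one_iff]
      exact div_neg_of_neg_of_pos (by linarith) hn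
    · rintro ⟨h0, h1⟩
      refine ⟨-(n * Real.log x), ?_, ?_⟩
      · have := Real.log_neg h0 h1
        nlinarith
      · rw [neg_neg, mul_div_cancel_left₀ _ hn.ne', Real.exp_log h0]
  rw [intervalIntegral.integral_of_le zero_le_one, integral_Ioc_eq_integral_Ioo, ← himg]
  rw [integral_image_eq_integral_abs_deriv_smul (f' := fun u => Real.exp (-u / n) * (-1 / n))
    measurableSet_Ioi]
  · apply integral_congr_ae
    refine Eventually.of_forall fun u => ?_
    simp only [smul_eq_mul]
    rw [abs_mul, abs_div, abs_neg, abs_one, abs_of_pos (Real.exp_pos _), abs_of_pos hn]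
    ring
  · intro x _
    exact (((hasDerivAt_id x).neg.div_const n).exp).hasDerivWithinAt
  · intro x _ y _ h
    have := Real.exp_injective h
    field_simp at this
    linarith

lemma lim1 (u v : ℝ) : Tendsto (fun n : ℕ => (n:ℝ) * (Real.exp (-v / n) - Real.exp (-u / n)))
    atTop (𝓝 (u - v)) := by
  have h : HasDerivAt (fun t : ℝ => Real.exp (-v * t) - Real.exp (-u * t)) (u - v) 0 := by
    have h1 := ((hasDerivAt_id (0:ℝ)).const_mul (-v)).exp
    have h2 := ((hasDerivAt_id (0:ℝ)).const_mul (-u)).exp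
    have := h1.sub h2
    simp only [id, mul_zero, Real.exp_zero, one_mul, mul_one] at this
    rwa [show -v - -u = u - v by ring] at this
  rw [hasDerivAt_iff_tendsto_slope_zero] at h
  have hn : Tendsto (fun n : ℕ => ((n:ℝ))⁻¹) atTop (𝓝[≠] 0) := by
    rw [tendsto_nhdsWithin_iff]
    refine ⟨tendsto_inv_atTop_nhds_zero_nat, ?_⟩
    filter_upwards [eventually_gt_atTop 0] with n hn
    have : (0:ℝ) < n := by exact_mod_cast hn
    simp [this.ne']
  refine (h.comp hn).congr fun n => ?_
  simp [div_eq_mul_inv]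

/-- kernel bound -/
lemma kbound (a n u v : ℝ) (ha : -1 < a) (ha0 : a < 0) (hn : 0 < n) (hu : 0 < u) (hv : 0 < v) :
    (n * |Real.exp (-v / n) - Real.exp (-u / n)|) ^ a * (Real.exp (-u / n) * Real.exp (-v / n))
      ≤ |u - v| ^ a := by
  rcases eq_or_ne u v with rfl | huv
  · simp [Real.zero_rpow ha0.ne]
  have hpos : 0 < |u - v| := abs_pos.2 (sub_ne_zero.2 huv)
  have key : ∀ x y : ℝ, 0 < x → x ≤ y → Real.exp (-(x + y) / n) * (y - x) ≤
      n * (Real.exp (-x / n) - Real.exp (-y / n)) := by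
    intro x y hx hxy
    have h1 : Real.exp (-x / n) = Real.exp (-y / n) * Real.exp ((y - x) / n) := by
      rw [← Real.exp_add]; congr 1; ring
    have h2 := Real.add_one_le_exp ((y - x) / n)
    have h3 : Real.exp (-(x + y) / n) ≤ Real.exp (-y / n) := by
      apply Real.exp_le_exp.2
      gcongr
      linarith
    calc Real.exp (-(x + y) / n) * (y - x) ≤ Real.exp (-y / n) * (y - x) :=
          mul_le_mul_of_nonneg_right h3 (by linarith)
      _ = n * (Real.exp (-y / n) * ((y - x) / n + 1) - Real.exp (-y / n)) := by
          field_simp; ring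
      _ ≤ _ := by
          rw [h1]
          gcongr
  have hk : Real.exp (-(u + v) / n) * |u - v| ≤ n * |Real.exp (-v / n) - Real.exp (-u / n)| := by
    rcases le_total u v with h | h
    · have := key u v hu h
      rw [abs_sub_comm, abs_of_nonneg (sub_nonneg.2 h), abs_sub_comm]
      exact this.trans (mul_le_mul_of_nonneg_left (le_abs_self _) hn.le)
    · have := key v u hv h
      rw [abs_of_nonneg (sub_nonneg.2 h), add_comm u v]
      exact this.trans (mul_le_mul_of_nonneg_left (le_abs_self _) hn.le)
  have h1 := Real.rpow_le_rpow_of_nonpos (mul_pos (Real.exp_pos _) hpos) hk ha0.le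
  rw [Real.mul_rpow (Real.exp_pos _).le hpos.le, ← Real.exp_mul] at h1
  rw [← Real.exp_add]
  calc _ ≤ Real.exp (-(u + v) / n * a) * |u - v| ^ a * Real.exp (-u / n + -v / n) :=
        mul_le_mul_of_nonneg_right h1 (Real.exp_pos _).le
    _ = Real.exp (-((u + v) / n * (1 + a))) * |u - v| ^ a := by
        rw [mul_right_comm, ← Real.exp_add]; congr 2; ring
    _ ≤ 1 * |u - v| ^ a := by
        gcongr
        rw [Real.exp_le_one_iff, neg_nonpos]
        have : 0 < 1 + a := by linarith
        positivity
    _ = _ := one_mul _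

lemma ebound (n u v : ℝ) (hn : 0 < n) (hu : 0 ≤ u) (hv : 0 ≤ v) :
    n * |Real.exp (-v / n) - Real.exp (-u / n)| ≤ |u - v| := by
  have key : ∀ x y : ℝ, 0 ≤ x → x ≤ y → 
      n * (Real.exp (-x / n) - Real.exp (-y / n)) ≤ y - x := by
    intro x y hx hxy
    have h1 : Real.exp (-y / n) = Real.exp (-x / n) * Real.exp (-(y - x) / n) := by
      rw [← Real.exp_add]; congr 1; ring
    have h2 := Real.add_one_le_exp (-(y - x) / n)
    have h3 : Real.exp (-x / n) ≤ 1 := by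
      rw [Real.exp_le_one_iff, neg_div, neg_nonpos]; positivity
    have h4 : 0 ≤ (y - x) / n := div_nonneg (by linarith) hn.le
    have h5 : Real.exp (-x / n) - Real.exp (-y / n) ≤ (y - x) / n := by
      rw [h1]
      have := Real.exp_pos (-x / n)
      have e : -(y - x) / n = -((y-x)/n) := neg_div _ _
      rw [e] at h2 ⊢
      nlinarith
    calc _ ≤ n * ((y - x) / n) := mul_le_mul_of_nonneg_left h5 hn.le
      _ = _ := by field_simp
  have mono : ∀ x y : ℝ, x ≤ y → 0 ≤ Real.exp (-x / n) - Real.exp (-y / n) := by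
    intro x y h
    rw [sub_nonneg]
    apply Real.exp_le_exp.2
    gcongr
  rcases le_total u v with h | h
  · rw [abs_sub_comm, abs_of_nonneg (mono u v h), abs_sub_comm u v, abs_of_nonneg (sub_nonneg.2 h)]
    exact key u v hu h
  · rw [abs_of_nonneg (mono v u h), abs_of_nonneg (sub_nonneg.2 h)]
    exact key v u hv h

noncomputable abbrev nu : Measure ℝ := volume.restrict (Ioi (0:ℝ))

lemma integ2 (a b : ℝ) (ha : -1 < a) (hb : 0 ≤ b) :
    Integrable (fun p : ℝ × ℝ => |p.1 - p.2| ^ a * p.2 ^ b * Real.exp (-(p.1 + p.2)))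
      (nu.prod nu) := by
  have h1 : ∀ c : ℝ, -1 < c → IntegrableOn (fun v : ℝ => v ^ c * Real.exp (-(1/2) * v)) (Ioi 0) := by
    intro c hc
    have := integrableOn_rpow_mul_exp_neg_mul_rpow (p := 1) (s := c) (b := 1/2) hc one_pos
      (by norm_num)
    simpa using this
  have h2 : Integrable (fun w : ℝ => |w| ^ a * Real.exp (-(1/2) * |w|)) := by
    have hp : IntegrableOn (fun w : ℝ => |w| ^ a * Real.exp (-(1/2) * |w|)) (Ioi 0) :=
      (h1 a ha).congr_fun (fun w hw => by simp only [abs_of_pos (mem_Ioi.1 hw)]) measurableSet_Ioi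
    have hm : IntegrableOn (fun w : ℝ => |w| ^ a * Real.exp (-(1/2) * |w|)) (Iic 0) := by
      have := ((Iff.mpr integrableOn_Ici_iff_integrableOn_Ioi hp :
        IntegrableOn (fun w : ℝ => |w| ^ a * Real.exp (-(1/2) * |w|)) (Ici 0))).comp_neg
      simpa using this
    rw [← integrableOn_univ, ← Iic_union_Ioi (a := (0:ℝ))]
    exact hm.union hp
  have h3 : Integrable ((Ioi (0:ℝ)).indicator (fun v : ℝ => v ^ b * Real.exp (-(1/2) * v))) :=
    (integrable_indicator_iff measurableSet_Ioi).2 (h1 b (by linarith))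
  have h4 := Integrable.convolution_integrand (ContinuousLinearMap.mul ℝ ℝ) h3 h2
  have h5 := h4.restrict (s := Ioi 0 ×ˢ Ioi 0)
  rw [← Measure.prod_restrict] at h5
  refine h5.mono' (by fun_prop) ?_
  rw [Measure.prod_restrict]
  refine (ae_restrict_iff' (measurableSet_Ioi.prod measurableSet_Ioi)).2 (Eventually.of_forall ?_)
  rintro ⟨u, v⟩ ⟨hu, hv⟩
  simp only [mem_Ioi] at hu hv
  simp only [ContinuousLinearMap.mul_apply', indicator_of_mem (mem_Ioi.2 hv)]
  rw [Real.norm_of_nonneg (by positivity)]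
  have : Real.exp (-(u + v)) ≤ Real.exp (-(1/2) * v) * Real.exp (-(1/2) * |u - v|) := by
    rw [← Real.exp_add]
    apply Real.exp_le_exp.2
    have : |u - v| ≤ u + v := abs_le.2 ⟨by linarith, by linarith⟩
    linarith
  calc _ ≤ |u - v| ^ a * v ^ b * (Real.exp (-(1/2) * v) * Real.exp (-(1/2) * |u - v|)) := by
        gcongr
    _ = _ := by ring

lemma integ4 (A B : ℝ × ℝ → ℝ) (hA : Integrable A (nu.prod nu)) (hB : Integrable B (nu.prod nu)) :
    Integrable (fun p : ℝ × ℝ × ℝ × ℝ => A (p.1, p.2.2.1) * B (p.2.1, p.2.2.2))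
      (nu.prod (nu.prod (nu.prod nu))) := by
  have h := hA.mul_prod hB
  have m1 : MeasurePreserving (MeasurableEquiv.prodAssoc (α := ℝ) (β := ℝ) (γ := ℝ × ℝ)).symm
    (nu.prod (nu.prod (nu.prod nu))) ((nu.prod nu).prod (nu.prod nu)) :=
    (measurePreserving_prodAssoc nu nu (nu.prod nu)).symm
  have m2 : MeasurePreserving (fun q : ℝ × ℝ × ℝ => (q.2.1, q.1, q.2.2))
      (nu.prod (nu.prod nu)) (nu.prod (nu.prod nu)) :=
    (measurePreserving_prodAssoc nu nu nu).comp
      (((Measure.measurePreserving_swap (μ := nu) (ν := nu)).prod (MeasurePreserving.id nu)).comp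
        (measurePreserving_prodAssoc nu nu nu).symm)
  have m3 := m1.comp ((MeasurePreserving.id nu).prod m2)
  exact m3.integrable_comp_of_integrable h

lemma iter (F : ℝ → ℝ → ℝ → ℝ → ℝ)
    (h : Integrable (fun p : ℝ × ℝ × ℝ × ℝ => F p.1 p.2.1 p.2.2.1 p.2.2.2)
      (nu.prod (nu.prod (nu.prod nu)))) :
    ∫ a in Ioi (0:ℝ), ∫ b in Ioi (0:ℝ), ∫ c in Ioi (0:ℝ), ∫ d in Ioi (0:ℝ), F a b c d =
      ∫ p, F p.1 p.2.1 p.2.2.1 p.2.2.2 ∂(nu.prod (nu.prod (nu.prod nu))) := by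
  rw [integral_prod _ h]
  apply integral_congr_ae
  filter_upwards [h.prod_right_ae] with a ha
  rw [integral_prod _ ha]
  apply integral_congr_ae
  filter_upwards [ha.prod_right_ae] with b hb
  rw [integral_prod _ hb]

noncomputable def DD (n u v : ℝ) : ℝ := n * |Real.exp (-v / n) - Real.exp (-u / n)|

noncomputable def GG (H n u₁ u₂ v₁ v₂ : ℝ) : ℝ :=
  Real.exp (-(u₁ + v₁)) * Real.exp (-(u₂ + v₂)) *
    (DD n u₁ v₁ ^ (2 * H - 2) * (Real.exp (-u₁ / n) * Real.exp (-v₁ / n))) *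
    (DD n u₂ v₂ ^ (2 * H - 2) * (Real.exp (-u₂ / n) * Real.exp (-v₂ / n))) *
    (DD n v₁ 0 ^ (2 * H) + DD n v₂ 0 ^ (2 * H) - DD n v₂ v₁ ^ (2 * H))

noncomputable def Glim (H u₁ u₂ v₁ v₂ : ℝ) : ℝ :=
  Real.exp (-(u₁ + v₁)) * Real.exp (-(u₂ + v₂)) *
    |u₁ - v₁| ^ (2 * H - 2) * |u₂ - v₂| ^ (2 * H - 2) *
    (v₁ ^ (2 * H) + v₂ ^ (2 * H) - |v₂ - v₁| ^ (2 * H))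

noncomputable def DOM (H : ℝ) (p : ℝ × ℝ × ℝ × ℝ) : ℝ :=
  2 * ((|p.1 - p.2.2.1| ^ (2 * H - 2) * p.2.2.1 ^ (2 * H) * Real.exp (-(p.1 + p.2.2.1))) *
      (|p.2.1 - p.2.2.2| ^ (2 * H - 2) * p.2.2.2 ^ (0:ℝ) * Real.exp (-(p.2.1 + p.2.2.2)))) +
  2 * ((|p.1 - p.2.2.1| ^ (2 * H - 2) * p.2.2.1 ^ (0:ℝ) * Real.exp (-(p.1 + p.2.2.1))) *
      (|p.2.1 - p.2.2.2| ^ (2 * H - 2) * p.2.2.2 ^ (2 * H) * Real.exp (-(p.2.1 + p.2.2.2))))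

lemma integDOM (H : ℝ) (h1 : 1/2 < H) : Integrable (DOM H) (nu.prod (nu.prod (nu.prod nu))) := by
  have A := integ2 (2 * H - 2) (2 * H) (by linarith) (by linarith)
  have B := integ2 (2 * H - 2) 0 (by linarith) le_rfl
  exact ((integ4 _ _ A B).const_mul 2).add ((integ4 _ _ B A).const_mul 2)

lemma tendstoGG (H : ℝ) (h1 : 1/2 < H) (h2 : H < 1) (u₁ u₂ v₁ v₂ : ℝ) (hv₁ : 0 < v₁)
    (hv₂ : 0 < v₂) :
    Tendsto (fun n : ℕ => GG H n u₁ u₂ v₁ v₂) atTop (𝓝 (Glim H u₁ u₂ v₁ v₂)) := by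
  have hD : ∀ u v, Tendsto (fun n : ℕ => DD n u v) atTop (𝓝 |u - v|) := by
    intro u v
    refine (lim1 u v).abs.congr fun n => ?_
    rw [DD, abs_mul, Nat.abs_cast]
  have hDa : ∀ u v, Tendsto (fun n : ℕ => DD n u v ^ (2 * H - 2)) atTop
      (𝓝 (|u - v| ^ (2 * H - 2))) := by
    intro u v
    rcases eq_or_ne u v with rfl | huv
    · simp [DD]
    · exact (hD u v).rpow_const (Or.inl (abs_pos.2 (sub_ne_zero.2 huv)).ne')
  have hDb : ∀ u v, Tendsto (fun n : ℕ => DD n u v ^ (2 * H)) atTop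
      (𝓝 (|u - v| ^ (2 * H))) := fun u v => (hD u v).rpow_const (Or.inr (by linarith))
  have hE : ∀ u : ℝ, Tendsto (fun n : ℕ => Real.exp (-u / n)) atTop (𝓝 1) := by
    intro u
    rw [← Real.exp_zero]
    exact (Real.continuous_exp.tendsto 0).comp (tendsto_const_div_atTop_nhds_zero_nat (-u))
  have := ((tendsto_const_nhds (x := Real.exp (-(u₁ + v₁)) * Real.exp (-(u₂ + v₂)))).mul
    ((hDa u₁ v₁).mul ((hE u₁).mul (hE v₁)))).mul ((hDa u₂ v₂).mul ((hE u₂).mul (hE v₂)))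
  have := this.mul (((hDb v₁ 0).add (hDb v₂ 0)).sub (hDb v₂ v₁))
  simp only [sub_zero, abs_of_pos hv₁, abs_of_pos hv₂, mul_one] at this
  exact this

lemma boundGG (H n : ℝ) (h1 : 1/2 < H) (h2 : H < 1) (hn : 0 < n) (u₁ u₂ v₁ v₂ : ℝ)
    (hu₁ : 0 < u₁) (hu₂ : 0 < u₂) (hv₁ : 0 < v₁) (hv₂ : 0 < v₂) :
    ‖GG H n u₁ u₂ v₁ v₂‖ ≤ DOM H (u₁, u₂, v₁, v₂) := by
  have hD0 : ∀ u v, 0 ≤ DD n u v := fun u v => mul_nonneg hn.le (abs_nonneg _)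
  have b1 : DD n v₁ 0 ^ (2 * H) ≤ v₁ ^ (2 * H) := by
    refine Real.rpow_le_rpow (hD0 _ _) ?_ (by linarith)
    have := ebound n v₁ 0 hn hv₁.le le_rfl
    rwa [sub_zero, abs_of_pos hv₁] at this
  have b2 : DD n v₂ 0 ^ (2 * H) ≤ v₂ ^ (2 * H) := by
    refine Real.rpow_le_rpow (hD0 _ _) ?_ (by linarith)
    have := ebound n v₂ 0 hn hv₂.le le_rfl
    rwa [sub_zero, abs_of_pos hv₂] at this
  have b3 : DD n v₂ v₁ ^ (2 * H) ≤ v₁ ^ (2 * H) + v₂ ^ (2 * H) := by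
    have h3 : DD n v₂ v₁ ≤ max v₁ v₂ := by
      refine (ebound n v₂ v₁ hn hv₂.le hv₁.le).trans ?_
      rw [abs_le]
      have := le_max_left v₁ v₂
      have := le_max_right v₁ v₂
      constructor <;> linarith
    have h4 := Real.rpow_le_rpow (hD0 _ _) h3 (show 0 ≤ 2 * H by linarith)
    have p1 : 0 ≤ v₁ ^ (2 * H) := by positivity
    have p2 : 0 ≤ v₂ ^ (2 * H) := by positivity
    rcases max_choice v₁ v₂ with h | h <;> rw [h] at h4 <;> linarith
  have n1 : 0 ≤ DD n v₁ 0 ^ (2 * H) := Real.rpow_nonneg (hD0 _ _) _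
  have n2 : 0 ≤ DD n v₂ 0 ^ (2 * H) := Real.rpow_nonneg (hD0 _ _) _
  have n3 : 0 ≤ DD n v₂ v₁ ^ (2 * H) := Real.rpow_nonneg (hD0 _ _) _
  have hB : |DD n v₁ 0 ^ (2 * H) + DD n v₂ 0 ^ (2 * H) - DD n v₂ v₁ ^ (2 * H)| ≤
      2 * (v₁ ^ (2 * H) + v₂ ^ (2 * H)) := by
    rw [abs_le]; constructor <;> linarith
  have k1 := kbound (2 * H - 2) n u₁ v₁ (by linarith) (by linarith) hn hu₁ hv₁
  have k2 := kbound (2 * H - 2) n u₂ v₂ (by linarith) (by linarith) hn hu₂ hv₂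
  have m1 : 0 ≤ DD n u₁ v₁ ^ (2 * H - 2) := Real.rpow_nonneg (hD0 _ _) _
  have m2 : 0 ≤ DD n u₂ v₂ ^ (2 * H - 2) := Real.rpow_nonneg (hD0 _ _) _
  rw [Real.norm_eq_abs, GG, abs_mul, abs_of_nonneg (by positivity)]
  calc _ ≤ Real.exp (-(u₁ + v₁)) * Real.exp (-(u₂ + v₂)) * |u₁ - v₁| ^ (2 * H - 2) *
        |u₂ - v₂| ^ (2 * H - 2) * (2 * (v₁ ^ (2 * H) + v₂ ^ (2 * H))) := by
        change DD n u₁ v₁ ^ (2 * H - 2) * _ ≤ _ at k1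
        change DD n u₂ v₂ ^ (2 * H - 2) * _ ≤ _ at k2
        gcongr
    _ = _ := by
        simp only [DOM, Real.rpow_zero]
        ring

lemma eqGG (H : ℝ) (n : ℕ) (hn : 0 < n) (u₁ u₂ v₁ v₂ : ℝ) (hv₁ : 0 < v₁) (hv₂ : 0 < v₂) :
    (n:ℝ) ^ (6 * H) * (Real.exp (-u₁ / n) / n * (Real.exp (-u₂ / n) / n *
      (Real.exp (-v₁ / n) / n * (Real.exp (-v₂ / n) / n *
      (Real.exp (-u₁ / n) ^ n * Real.exp (-v₁ / n) ^ n * Real.exp (-u₂ / n) ^ n *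
        Real.exp (-v₂ / n) ^ n *
            ((1 - Real.exp (-v₁ / n)) ^ (2 * H) + (1 - Real.exp (-v₂ / n)) ^ (2 * H)
              - |Real.exp (-v₁ / n) - Real.exp (-v₂ / n)| ^ (2 * H)) *
            |Real.exp (-v₁ / n) - Real.exp (-u₁ / n)| ^ (2 * H - 2) *
            |Real.exp (-v₂ / n) - Real.exp (-u₂ / n)| ^ (2 * H - 2)))))) =
    GG H n u₁ u₂ v₁ v₂ := by
  have hn' : (0:ℝ) < n := by exact_mod_cast hn
  have hp : ∀ u : ℝ, Real.exp (-u / n) ^ n = Real.exp (-u) := by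
    intro u
    rw [← Real.exp_nat_mul]
    congr 1
    field_simp
  have hle : ∀ v : ℝ, 0 < v → |Real.exp (-0 / n) - Real.exp (-v / n)| = 1 - Real.exp (-v / n) := by
    intro v hv
    rw [neg_zero, zero_div, Real.exp_zero, abs_of_nonneg]
    rw [sub_nonneg, Real.exp_le_one_iff, neg_div, neg_nonpos]
    positivity
  have hpow : (n:ℝ) ^ (6 * H) = n ^ 4 * (n:ℝ) ^ (2 * H) * ((n:ℝ) ^ (2 * H - 2)) ^ 2 := by
    rw [← Real.rpow_natCast, ← Real.rpow_natCast, ← Real.rpow_mul hn'.le, ← Real.rpow_add hn',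
      ← Real.rpow_add hn']
    congr 1
    push_cast
    ring
  simp only [GG, DD, hp, hpow]
  simp only [Real.mul_rpow hn'.le (abs_nonneg _)]
  simp only [hle _ hv₁, hle _ hv₂, neg_add, Real.exp_add]
  field_simp

lemma eqGL (H : ℝ) (u₁ u₂ v₁ v₂ : ℝ) (hv₁ : 0 < v₁) (hv₂ : 0 < v₂) :
    (Real.exp (-u₁ / 1) / 1 * (Real.exp (-u₂ / 1) / 1 *
      (Real.exp (-v₁ / 1) / 1 * (Real.exp (-v₂ / 1) / 1 *
      (|Real.log (Real.exp (-v₁ / 1)) - Real.log (Real.exp (-u₁ / 1))| ^ (2 * H - 2) *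
            |Real.log (Real.exp (-v₂ / 1)) - Real.log (Real.exp (-u₂ / 1))| ^ (2 * H - 2) *
            (|Real.log (Real.exp (-v₁ / 1))| ^ (2 * H) + |Real.log (Real.exp (-v₂ / 1))| ^ (2 * H)
              - |Real.log (Real.exp (-v₁ / 1)) - Real.log (Real.exp (-v₂ / 1))| ^ (2 * H))))))) =
    Glim H u₁ u₂ v₁ v₂ := by
  simp only [Real.log_exp, div_one, Glim, abs_neg, abs_of_pos hv₁, abs_of_pos hv₂,
    show ∀ x y : ℝ, -x - -y = y - x from fun x y => by ring, neg_add, Real.exp_add]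
  ring

/-- Identification of the asymptotic variance `σ²_{H,1}` for `H ∈ (1/2,1)`:
`2H²(2H−1)² n^{6H} ∫_{[0,1]⁴} s₁ⁿt₁ⁿs₂ⁿt₂ⁿ ((1−t₁)^{2H}+(1−t₂)^{2H}−|t₁−t₂|^{2H})
|t₁−s₁|^{2H−2}|t₂−s₂|^{2H−2} → σ²_{H,1}` as `n → ∞`, where `σ²_{H,1}` is given by the
logarithmic-variables integral. -/
theorem stmt13 (H : ℝ) (hH : H ∈ Set.Ioo (1/2 : ℝ) 1) :
    Tendsto
      (fun n : ℕ => 2 * H ^ 2 * (2 * H - 1) ^ 2 * (n:ℝ) ^ (6 * H) *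
        ∫ s₁ in (0:ℝ)..1, ∫ s₂ in (0:ℝ)..1, ∫ t₁ in (0:ℝ)..1, ∫ t₂ in (0:ℝ)..1,
          s₁ ^ n * t₁ ^ n * s₂ ^ n * t₂ ^ n *
            ((1 - t₁) ^ (2 * H) + (1 - t₂) ^ (2 * H) - |t₁ - t₂| ^ (2 * H)) *
            |t₁ - s₁| ^ (2 * H - 2) * |t₂ - s₂| ^ (2 * H - 2))
      atTop
      (nhds (2 * H ^ 2 * (2 * H - 1) ^ 2 *
        ∫ x₁ in (0:ℝ)..1, ∫ x₂ in (0:ℝ)..1, ∫ y₁ in (0:ℝ)..1, ∫ y₂ in (0:ℝ)..1,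
          |Real.log y₁ - Real.log x₁| ^ (2 * H - 2) *
            |Real.log y₂ - Real.log x₂| ^ (2 * H - 2) *
            (|Real.log y₁| ^ (2 * H) + |Real.log y₂| ^ (2 * H)
              - |Real.log y₁ - Real.log y₂| ^ (2 * H)))) := by
  obtain ⟨h1, h2⟩ := hH
  set P := nu.prod (nu.prod (nu.prod nu)) with hP
  have hae : ∀ᵐ p ∂P, 0 < p.1 ∧ 0 < p.2.1 ∧ 0 < p.2.2.1 ∧ 0 < p.2.2.2 := by
    simp only [hP, nu, Measure.prod_restrict]
    refine (ae_restrict_iff' (measurableSet_Ioi.prod (measurableSet_Ioi.prod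
      (measurableSet_Ioi.prod measurableSet_Ioi)))).2 (Eventually.of_forall ?_)
    rintro ⟨a, b, c, d⟩ ⟨ha, hb, hc, hd⟩
    exact ⟨ha, hb, hc, hd⟩
  have hmeas : ∀ n : ℕ, AEStronglyMeasurable
      (fun p : ℝ × ℝ × ℝ × ℝ => GG H n p.1 p.2.1 p.2.2.1 p.2.2.2) P := by
    intro n
    apply Measurable.aestronglyMeasurable
    unfold GG DD
    fun_prop
  have hbd : ∀ n : ℕ, 0 < n → ∀ᵐ p ∂P, ‖GG H n p.1 p.2.1 p.2.2.1 p.2.2.2‖ ≤ DOM H p := by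
    intro n hn
    filter_upwards [hae] with p hp
    exact boundGG H n h1 h2 (by exact_mod_cast hn) _ _ _ _ hp.1 hp.2.1 hp.2.2.1 hp.2.2.2
  have hlim : ∀ᵐ p ∂P, Tendsto (fun n : ℕ => GG H n p.1 p.2.1 p.2.2.1 p.2.2.2) atTop
      (𝓝 (Glim H p.1 p.2.1 p.2.2.1 p.2.2.2)) := by
    filter_upwards [hae] with p hp
    exact tendstoGG H h1 h2 _ _ _ _ hp.2.2.1 hp.2.2.2
  have hDOM := integDOM H h1
  have hGL : Integrable (fun p : ℝ × ℝ × ℝ × ℝ => Glim H p.1 p.2.1 p.2.2.1 p.2.2.2) P := by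
    refine hDOM.mono' ?_ ?_
    · apply Measurable.aestronglyMeasurable
      unfold Glim
      fun_prop
    · filter_upwards [hae, hlim] with p hp hl
      refine le_of_tendsto hl.norm ?_
      filter_upwards [eventually_gt_atTop 0] with n hn
      exact boundGG H n h1 h2 (by exact_mod_cast hn) _ _ _ _ hp.1 hp.2.1 hp.2.2.1 hp.2.2.2
  have hmain := tendsto_integral_filter_of_dominated_convergence (μ := P) (DOM H)
    (Eventually.of_forall hmeas) ((eventually_gt_atTop 0).mono hbd) hDOM hlim
  have hR : (∫ x₁ in (0:ℝ)..1, ∫ x₂ in (0:ℝ)..1, ∫ y₁ in (0:ℝ)..1, ∫ y₂ in (0:ℝ)..1,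
          |Real.log y₁ - Real.log x₁| ^ (2 * H - 2) *
            |Real.log y₂ - Real.log x₂| ^ (2 * H - 2) *
            (|Real.log y₁| ^ (2 * H) + |Real.log y₂| ^ (2 * H)
              - |Real.log y₁ - Real.log y₂| ^ (2 * H))) =
      ∫ p, Glim H p.1 p.2.1 p.2.2.1 p.2.2.2 ∂P := by
    rw [← iter (Glim H) hGL]
    simp only [cov 1 one_pos, ← integral_const_mul]
    refine setIntegral_congr_fun measurableSet_Ioi fun u₁ _ => ?_
    refine setIntegral_congr_fun measurableSet_Ioi fun u₂ _ => ?_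
    refine setIntegral_congr_fun measurableSet_Ioi fun v₁ hv₁ => ?_
    refine setIntegral_congr_fun measurableSet_Ioi fun v₂ hv₂ => ?_
    exact eqGL H u₁ u₂ v₁ v₂ hv₁ hv₂
  rw [hR]
  refine (hmain.const_mul (2 * H ^ 2 * (2 * H - 1) ^ 2)).congr' ?_
  filter_upwards [eventually_gt_atTop 0] with n hn
  have hn' : (0:ℝ) < n := by exact_mod_cast hn
  rw [← iter (GG H n) (hDOM.mono' (hmeas n) (hbd n hn)), mul_assoc _ ((n:ℝ) ^ (6 * H))]
  congr 1
  simp only [cov n hn', ← integral_const_mul]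
  refine setIntegral_congr_fun measurableSet_Ioi fun u₁ _ => ?_
  refine setIntegral_congr_fun measurableSet_Ioi fun u₂ _ => ?_
  refine setIntegral_congr_fun measurableSet_Ioi fun v₁ hv₁ => ?_
  refine setIntegral_congr_fun measurableSet_Ioi fun v₂ hv₂ => ?_
  exact (eqGG H n hn u₁ u₂ v₁ v₂ hv₁ hv₂).symm
end

section
/- Let H ∈ (1/2, 1). Then lim_{n→∞} H³(2H−1)³ n^{2+2H} ∫_{[0,1]⁴} t₁ⁿ t₂ⁿ · ( ∫_{s₁}^1 ∫_{s₂}^1 θ₁ⁿ θ₂ⁿ |θ₁−θ₂|^{2H−2} dθ₁ dθ₂ ) · |t₁−s₁|^{2H−2} |t₂−s₂|^{2H−2} ds₁ dt₁ ds₂ dt₂ = σ²_{H,2}, where σ²_{H,2} = H³(2H−1)³ ( ∫_{[0,1]²} (1−s₁)^{2H−2} (1−s₂)^{2H−2} ds₁ ds₂ ) · ( ∫_{[0,1]²} |log x₁ − log x₂|^{2H−2} dx₁ dx₂ ). -/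
open Filter
open MeasureTheory Set Topology

/-- Truncated kernel. -/
noncomputable def kk (a δ x : ℝ) : ℝ := if |x| < δ then |x| ^ a else 0

lemma kk_nonneg (a δ x : ℝ) : 0 ≤ kk a δ x := by
  unfold kk; split_ifs <;> positivity

lemma kk_integral {a δ : ℝ} (ha : -1 < a) (hδ : 0 < δ) :
    ∫ x, kk a δ x = 2 * (δ ^ (a + 1) / (a + 1)) := by
  have h1 : (fun x => kk a δ x) = fun x => (fun y : ℝ => (Iio δ).indicator (fun y => y ^ a) y) |x| := by
    funext x; simp [kk, indicator]
  rw [h1, integral_comp_abs]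
  congr 1
  rw [setIntegral_indicator measurableSet_Iio, Ioi_inter_Iio, ← integral_Ioc_eq_integral_Ioo,
    ← intervalIntegral.integral_of_le hδ.le, integral_rpow (Or.inl ha), Real.zero_rpow (by linarith),
    sub_zero]

lemma kk_integrable {a δ : ℝ} (ha : -1 < a) (hδ : 0 < δ) : Integrable (kk a δ) := by
  apply Integrable.of_integral_ne_zero
  rw [kk_integral ha hδ]
  have : 0 < a + 1 := by linarith
  positivity

lemma kk_integrable_sub {a δ : ℝ} (ha : -1 < a) (hδ : 0 < δ) (s : ℝ) :
    Integrable (fun t => kk a δ (t - s)) := (kk_integrable ha hδ).comp_sub_right s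

lemma kk_integral_sub {a δ : ℝ} (ha : -1 < a) (hδ : 0 < δ) (s : ℝ) :
    ∫ t, kk a δ (t - s) = 2 * (δ ^ (a + 1) / (a + 1)) := by
  rw [integral_sub_right_eq_self (kk a δ) s, kk_integral ha hδ]

lemma abs_le_kk {a δ : ℝ} (ha : a < 0) (hδ : 0 < δ) (x : ℝ) :
    |x| ^ a ≤ δ ^ a + kk a δ x := by
  unfold kk; split_ifs with h
  · have : 0 ≤ δ ^ a := by positivity
    linarith
  · simpa using Real.rpow_le_rpow_of_nonpos hδ (not_lt.1 h) ha.le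

lemma meas_abs (a s : ℝ) : Measurable (fun t : ℝ => |t - s| ^ a) := by
  fun_prop

lemma abs_integrableOn {a : ℝ} (ha : -1 < a) (ha' : a < 0) (s : ℝ) :
    IntegrableOn (fun t => |t - s| ^ a) (Ioc 0 1) := by
  refine Integrable.mono' (g := fun t => (1:ℝ) ^ a + kk a 1 (t - s)) ?_
    (meas_abs a s).aestronglyMeasurable ?_
  · exact (integrable_const _).add (kk_integrable_sub ha one_pos s).integrableOn
  · refine Eventually.of_forall fun t => ?_
    rw [Real.norm_of_nonneg (by positivity)]
    exact abs_le_kk ha' one_pos _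

/-- The inner kernel. -/
noncomputable def KK (a : ℝ) (n : ℕ) (s : ℝ) : ℝ :=
  n * ∫ t in (0:ℝ)..1, t ^ n * |t - s| ^ a

lemma KK_eq (a : ℝ) (n : ℕ) (s : ℝ) :
    KK a n s = ∫ t in Ioc (0:ℝ) 1, (n * t ^ n) • |t - s| ^ a := by
  rw [KK, intervalIntegral.integral_of_le zero_le_one, ← integral_const_mul]
  simp [mul_assoc]

lemma KK_meas (a : ℝ) (n : ℕ) : StronglyMeasurable (KK a n) := by
  have : KK a n = fun s => ∫ t in Ioc (0:ℝ) 1, (n * t ^ n) • |t - s| ^ a := funext (KK_eq a n)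
  rw [this]
  apply StronglyMeasurable.integral_prod_right
  apply Measurable.stronglyMeasurable
  simp only [Function.uncurry_def]
  fun_prop

lemma KK_nonneg (a : ℝ) (n : ℕ) (s : ℝ) : 0 ≤ KK a n s := by
  rw [KK_eq]
  refine setIntegral_nonneg measurableSet_Ioc fun t ht => ?_
  have := ht.1
  rw [smul_eq_mul]
  positivity

lemma npow_bound (n : ℕ) {t : ℝ} (h0 : 0 < t) (_h1 : t ≤ 1) : n * t ^ n * (1 - t) ≤ 1 := by
  have h : (1:ℝ) + n * (t⁻¹ - 1) ≤ (1 + (t⁻¹ - 1)) ^ n :=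
    one_add_mul_le_pow (by have : 0 < t⁻¹ := by positivity
                           linarith) n
  have e : (1 + (t⁻¹ - 1)) ^ n = (t ^ n)⁻¹ := by simp
  rw [e] at h
  have hp : 0 < t ^ n := by positivity
  have h2 := mul_le_mul_of_nonneg_left h hp.le
  rw [mul_inv_cancel₀ hp.ne'] at h2
  have h3 : 1 - t ≤ t⁻¹ - 1 := by
    have : t * t⁻¹ = 1 := mul_inv_cancel₀ h0.ne'
    have h4 : 0 < t⁻¹ := by positivity
    nlinarith [sq_nonneg (t - 1)]
  have h5 : n * t ^ n * (1 - t) ≤ n * t ^ n * (t⁻¹ - 1) := by gcongr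
  nlinarith

lemma intnt (n : ℕ) : ∫ t in Ioc (0:ℝ) 1, (n * t ^ n : ℝ) = n / (n + 1) := by
  rw [← intervalIntegral.integral_of_le zero_le_one, intervalIntegral.integral_const_mul,
    integral_pow]
  simp; field_simp

lemma KK_bound {a : ℝ} (ha : -1 < a) (ha' : a < 0) :
    ∃ C : ℝ, 0 ≤ C ∧ ∀ n s, s < 1 → KK a n s ≤ C * (1 - s) ^ a := by
  have ha1 : 0 < a + 1 := by linarith
  refine ⟨(1 + 2 / (a + 1)) * (1 / 2 : ℝ) ^ a, by positivity, fun n s hs => ?_⟩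
  have hd : 0 < (1 - s) / 2 := by linarith
  set d := (1 - s) / 2 with hd'
  have e : 1 - s = 2 * d := by rw [hd']; ring
  have hcont : IntegrableOn (fun t : ℝ => (n * t ^ n : ℝ)) (Ioc 0 1) :=
    (Continuous.integrableOn_Icc (by fun_prop)).mono_set Ioc_subset_Icc_self
  have key : KK a n s ≤ ∫ t in Ioc (0:ℝ) 1, (d ^ a * (n * t ^ n) + d⁻¹ * kk a d (t - s)) := by
    rw [KK_eq]
    refine setIntegral_mono_on ?_ ?_ measurableSet_Ioc ?_
    · refine (abs_integrableOn ha ha' s).bdd_mul (c := n) (by fun_prop) ?_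
      refine (ae_restrict_iff' measurableSet_Ioc).2 (Eventually.of_forall fun t ht => ?_)
      have := ht.1
      rw [Real.norm_of_nonneg (by positivity)]
      exact mul_le_of_le_one_right (by positivity) (pow_le_one₀ ht.1.le ht.2)
    · exact (hcont.const_mul _).add ((kk_integrable_sub ha hd s).integrableOn.const_mul _)
    · intro t ht
      have ht0 := ht.1
      rw [smul_eq_mul]
      have hnt : 0 ≤ n * t ^ n := by positivity
      by_cases h : |t - s| < d
      · have h1 : d ≤ 1 - t := by
          have := (abs_lt.1 h).2
          linarith
        have h2 : n * t ^ n ≤ d⁻¹ := by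
          rw [← one_div, le_div_iff₀ hd]
          exact le_trans (by gcongr) (npow_bound n ht.1 ht.2)
        have h3 : kk a d (t - s) = |t - s| ^ a := by simp [kk, h]
        rw [h3]
        have : n * t ^ n * |t - s| ^ a ≤ d⁻¹ * |t - s| ^ a := by gcongr
        have : 0 ≤ d ^ a * (n * t ^ n) := by positivity
        linarith
      · have h3 : kk a d (t - s) = 0 := by simp [kk, h]
        rw [h3, mul_zero, add_zero, mul_comm]
        exact mul_le_mul_of_nonneg_right
          (Real.rpow_le_rpow_of_nonpos hd (not_lt.1 h) ha'.le) hnt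
  refine key.trans ?_
  rw [integral_add (hcont.const_mul _) ((kk_integrable_sub ha hd s).integrableOn.const_mul _),
    integral_const_mul (d ^ a), integral_const_mul d⁻¹, intnt]
  have h1 : ∫ t in Ioc (0:ℝ) 1, kk a d (t - s) ≤ 2 * (d ^ (a + 1) / (a + 1)) := by
    rw [← kk_integral_sub ha hd s]
    exact setIntegral_le_integral (kk_integrable_sub ha hd s)
      (Eventually.of_forall fun t => kk_nonneg _ _ _)
  have h2 : (n:ℝ) / (n + 1) ≤ 1 := by
    rw [div_le_one (by positivity)]; linarith
  calc _ ≤ d ^ a * 1 + d⁻¹ * (2 * (d ^ (a + 1) / (a + 1))) := by gcongr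
    _ = (1 + 2 / (a + 1)) * d ^ a := by
      rw [Real.rpow_add_one hd.ne']; field_simp
    _ = _ := by
      rw [mul_assoc, ← Real.mul_rpow (by norm_num) (by linarith)]
      congr 2; rw [hd']; ring

lemma KK_tendsto {a : ℝ} (ha : -1 < a) (ha' : a < 0) {s : ℝ} (hs : s < 1) :
    Tendsto (fun n => KK a n s) atTop (𝓝 ((1 - s) ^ a)) := by
  simp_rw [KK_eq]
  refine tendsto_setIntegral_peak_smul_of_integrableOn_of_tendsto (x₀ := 1) measurableSet_Ioc
    measurableSet_Ioc subset_rfl self_mem_nhdsWithin (by simp) ?_ ?_ ?_ ?_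
    (abs_integrableOn ha ha' s) ?_
  · exact Eventually.of_forall fun n t ht => by have := ht.1; positivity
  · intro u hu h1u
    obtain ⟨ε, hε, hball⟩ := Metric.isOpen_iff.1 hu 1 h1u
    set r := max (1 - ε) 0 with hr
    have hr1 : r < 1 := by rw [hr]; exact max_lt (by linarith) one_pos
    have hr0 : 0 ≤ r := le_max_right _ _
    have hl := tendsto_self_mul_const_pow_of_lt_one hr0 hr1
    rw [Metric.tendstoUniformlyOn_iff]
    intro e he
    filter_upwards [(tendsto_order.1 hl).2 e he] with n hn t ht
    have ht0 := ht.1.1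
    have htr : t ≤ r := by
      by_contra hc
      push Not at hc
      apply ht.2
      apply hball
      rw [Metric.mem_ball, Real.dist_eq, abs_lt]
      have := le_max_left (1 - ε) 0
      constructor <;> linarith [ht.1.2]
    simp only [Pi.zero_apply, dist_zero_left]
    rw [Real.norm_of_nonneg (by positivity)]
    refine lt_of_le_of_lt ?_ hn
    gcongr
  · simp_rw [intnt]
    exact tendsto_natCast_div_add_atTop 1
  · exact Eventually.of_forall fun n => by fun_prop
  · have : ContinuousAt (fun t : ℝ => |t - s| ^ a) 1 := by
      apply ContinuousAt.rpow_const (by fun_prop)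
      left
      rw [abs_ne_zero]; linarith
    have h := this.tendsto
    simp only [abs_of_pos (sub_pos.2 hs)] at h
    exact h.mono_left nhdsWithin_le_nhds

/-- Rescaled power weight. -/
noncomputable def ph (n : ℕ) (s u : ℝ) : ℝ := if u ≤ n * (1 - s) then (1 - u / n) ^ n else 0

lemma ph_meas (n : ℕ) : Measurable (fun p : ℝ × ℝ => ph n p.1 p.2) := by
  unfold ph
  refine Measurable.ite (measurableSet_le (by fun_prop) (by fun_prop)) (by fun_prop) (by fun_prop)

lemma ph_nonneg {n : ℕ} {s u : ℝ} (hs : s ∈ Ioo (0:ℝ) 1) (hn : 0 < n) : 0 ≤ ph n s u := by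
  unfold ph
  split_ifs with h
  · have hn' : (0:ℝ) < n := by exact_mod_cast hn
    have : u / n ≤ 1 - s := by rw [div_le_iff₀ hn']; linarith
    apply pow_nonneg
    linarith [hs.1]
  · exact le_rfl

lemma ph_le {n : ℕ} {s u : ℝ} (hs : s ∈ Ioo (0:ℝ) 1) : ph n s u ≤ Real.exp (-u) := by
  unfold ph
  split_ifs with h
  · apply Real.one_sub_div_pow_le_exp_neg
    have : (0:ℝ) ≤ n := by positivity
    nlinarith [hs.1]
  · positivity

lemma ph_tendsto {s u : ℝ} (hs : s ∈ Ioo (0:ℝ) 1) :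
    Tendsto (fun n => ph n s u) atTop (𝓝 (Real.exp (-u))) := by
  have h1 : Tendsto (fun n : ℕ => (n:ℝ) * (1 - s)) atTop atTop :=
    tendsto_natCast_atTop_atTop.atTop_mul_const (by linarith [hs.2])
  refine (Real.tendsto_one_add_div_pow_exp (-u)).congr' ?_
  filter_upwards [h1.eventually_ge_atTop u] with n hn
  rw [ph, if_pos hn, neg_div, ← sub_eq_add_neg]

lemma ph_subst {n : ℕ} (hn : 0 < n) {s : ℝ} (hs : s ∈ Ioo (0:ℝ) 1) (F : ℝ → ℝ) :
    ∫ θ in s..1, θ ^ n * F θ = (n:ℝ)⁻¹ * ∫ u in Ioi (0:ℝ), ph n s u * F (1 - u / n) := by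
  have hn' : (0:ℝ) < n := by exact_mod_cast hn
  have h0 : (0:ℝ) ≤ n * (1 - s) := by
    have := hs.2
    have : 0 < 1 - s := by linarith
    positivity
  have h := intervalIntegral.integral_comp_sub_div (a := 0) (b := n * (1 - s))
    (fun θ => θ ^ n * F θ) hn'.ne' 1
  have e1 : 1 - (n * (1 - s)) / n = s := by field_simp; ring
  rw [e1, zero_div, sub_zero, smul_eq_mul] at h
  have h2 : ∫ u in Ioi (0:ℝ), ph n s u * F (1 - u / n) =
      ∫ u in (0:ℝ)..(n * (1 - s)), (1 - u / n) ^ n * F (1 - u / n) := by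
    rw [intervalIntegral.integral_of_le h0, ← Ioi_inter_Iic, ← setIntegral_indicator measurableSet_Iic]
    congr 1
    funext u
    simp only [ph, indicator, mem_Iic]
    split_ifs <;> simp
  rw [h2, h]
  field_simp

/-- Rescaled double integral. -/
noncomputable def AA (a : ℝ) (n : ℕ) (s₁ s₂ : ℝ) : ℝ :=
  ∫ u in Ioi (0:ℝ), ph n s₁ u * ∫ v in Ioi (0:ℝ), ph n s₂ v * |u - v| ^ a

lemma AA_eq (a : ℝ) {n : ℕ} (hn : 0 < n) {s₁ s₂ : ℝ} (h₁ : s₁ ∈ Ioo (0:ℝ) 1)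
    (h₂ : s₂ ∈ Ioo (0:ℝ) 1) :
    (n:ℝ) ^ (2 + a) * (∫ θ₁ in s₁..1, ∫ θ₂ in s₂..1, θ₁ ^ n * θ₂ ^ n * |θ₁ - θ₂| ^ a)
      = AA a n s₁ s₂ := by
  have hn' : (0:ℝ) < n := by exact_mod_cast hn
  simp_rw [mul_assoc, intervalIntegral.integral_const_mul]
  rw [ph_subst hn h₁]
  simp_rw [ph_subst hn h₂]
  have e : ∀ u v : ℝ, |1 - u / n - (1 - v / n)| ^ a = (n:ℝ) ^ (-a) * |u - v| ^ a := by
    intro u v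
    have : 1 - u / n - (1 - v / n) = (v - u) / n := by field_simp; ring
    rw [this, abs_div, abs_of_pos hn', abs_sub_comm, Real.div_rpow (by positivity) hn'.le,
      Real.rpow_neg hn'.le]
    field_simp
  simp_rw [e]
  have e2 : ∀ u : ℝ, ph n s₁ u * ((n:ℝ)⁻¹ * ∫ v in Ioi (0:ℝ), ph n s₂ v * ((n:ℝ) ^ (-a) * |u - v| ^ a))
      = ((n:ℝ)⁻¹ * (n:ℝ) ^ (-a)) * (ph n s₁ u * ∫ v in Ioi (0:ℝ), ph n s₂ v * |u - v| ^ a) := by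
    intro u
    have : ∀ v, ph n s₂ v * ((n:ℝ) ^ (-a) * |u - v| ^ a) = (n:ℝ) ^ (-a) * (ph n s₂ v * |u - v| ^ a) := by
      intro v; ring
    simp_rw [this, integral_const_mul]
    ring
  simp_rw [e2, integral_const_mul]
  rw [← AA, Real.rpow_add hn', Real.rpow_neg hn'.le]
  have : (n:ℝ) ^ a ≠ 0 := by positivity
  norm_num
  field_simp

lemma AA_inner_meas (a : ℝ) (n : ℕ) :
    StronglyMeasurable (fun p : ℝ × ℝ => ∫ v in Ioi (0:ℝ), ph n p.1 v * |p.2 - v| ^ a) := by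
  apply StronglyMeasurable.integral_prod_right (f := fun (p : ℝ × ℝ) v => ph n p.1 v * |p.2 - v| ^ a)
  apply Measurable.stronglyMeasurable
  simp only [Function.uncurry_def]
  have h := (ph_meas n).comp (f := fun p : (ℝ × ℝ) × ℝ => (p.1.1, p.2)) (by fun_prop)
  exact h.mul (by fun_prop)

lemma AA_meas (a : ℝ) (n : ℕ) : StronglyMeasurable (fun p : ℝ × ℝ => AA a n p.1 p.2) := by
  unfold AA
  apply StronglyMeasurable.integral_prod_right
    (f := fun (p : ℝ × ℝ) u => ph n p.1 u * ∫ v in Ioi (0:ℝ), ph n p.2 v * |u - v| ^ a)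
  apply Measurable.stronglyMeasurable
  simp only [Function.uncurry_def]
  have h := (ph_meas n).comp (f := fun p : (ℝ × ℝ) × ℝ => (p.1.1, p.2)) (by fun_prop)
  have h2 := (AA_inner_meas a n).measurable.comp (f := fun p : (ℝ × ℝ) × ℝ => (p.1.2, p.2))
    (by fun_prop)
  exact h.mul h2

lemma bnd_integrable {a : ℝ} (ha : -1 < a) (u : ℝ) :
    IntegrableOn (fun v => Real.exp (-v) + kk a 1 (v - u)) (Ioi 0) :=
  (integrableOn_exp_neg_Ioi 0).add (kk_integrable_sub ha one_pos u).integrableOn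

lemma bnd_integral {a : ℝ} (ha : -1 < a) (u : ℝ) :
    ∫ v in Ioi 0, (Real.exp (-v) + kk a 1 (v - u)) ≤ 1 + 2 / (a + 1) := by
  rw [integral_add (integrableOn_exp_neg_Ioi 0) (kk_integrable_sub ha one_pos u).integrableOn,
    integral_exp_neg_Ioi_zero]
  have := setIntegral_le_integral (s := Ioi 0) (kk_integrable_sub ha one_pos u)
      (Eventually.of_forall fun t => kk_nonneg _ _ _)
  rw [kk_integral_sub ha one_pos, Real.one_rpow] at this
  have e : 2 * (1 / (a + 1)) = 2 / (a + 1) := by ring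
  linarith

lemma bnd_pt {a : ℝ} (ha' : a < 0) (u : ℝ) {v x : ℝ} (hv : 0 < v) (hx : 0 ≤ x)
    (hx' : x ≤ Real.exp (-v)) : x * |u - v| ^ a ≤ Real.exp (-v) + kk a 1 (v - u) := by
  have h := abs_le_kk ha' one_pos (v - u)
  rw [Real.one_rpow] at h
  rw [abs_sub_comm]
  have h1 : Real.exp (-v) ≤ 1 := by simpa using hv.le
  have h2 := kk_nonneg a 1 (v - u)
  calc x * |v - u| ^ a ≤ x * (1 + kk a 1 (v - u)) := by gcongr
    _ = x + x * kk a 1 (v - u) := by ring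
    _ ≤ Real.exp (-v) + 1 * kk a 1 (v - u) := by gcongr; linarith
    _ = _ := by ring

lemma inner_nonneg (a : ℝ) {n : ℕ} (hn : 0 < n) {s : ℝ} (hs : s ∈ Ioo (0:ℝ) 1) (u : ℝ) :
    0 ≤ ∫ v in Ioi (0:ℝ), ph n s v * |u - v| ^ a :=
  integral_nonneg fun v => mul_nonneg (ph_nonneg hs hn) (by positivity)

lemma inner_le {a : ℝ} (ha : -1 < a) (ha' : a < 0) {n : ℕ} (hn : 0 < n) {s : ℝ}
    (hs : s ∈ Ioo (0:ℝ) 1) (u : ℝ) :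
    ∫ v in Ioi (0:ℝ), ph n s v * |u - v| ^ a ≤ 1 + 2 / (a + 1) := by
  refine le_trans (integral_mono_of_nonneg ?_ (bnd_integrable ha u) ?_) (bnd_integral ha u)
  · exact Eventually.of_forall fun v => mul_nonneg (ph_nonneg hs hn) (by positivity)
  · refine (ae_restrict_iff' measurableSet_Ioi).2 (Eventually.of_forall fun v hv => ?_)
    exact bnd_pt ha' u hv (ph_nonneg hs hn) (ph_le hs)

lemma inner_tendsto {a : ℝ} (ha : -1 < a) (ha' : a < 0) {s : ℝ} (hs : s ∈ Ioo (0:ℝ) 1) (u : ℝ) :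
    Tendsto (fun n : ℕ => ∫ v in Ioi (0:ℝ), ph n s v * |u - v| ^ a) atTop
      (𝓝 (∫ v in Ioi (0:ℝ), Real.exp (-v) * |u - v| ^ a)) := by
  refine tendsto_integral_filter_of_dominated_convergence _ ?_ ?_ (bnd_integrable ha u) ?_
  · refine Eventually.of_forall fun n => Measurable.aestronglyMeasurable ?_
    exact ((ph_meas n).comp (f := fun v : ℝ => (s, v)) (by fun_prop)).mul (by fun_prop)
  · filter_upwards [eventually_gt_atTop 0] with n hn
    refine (ae_restrict_iff' measurableSet_Ioi).2 (Eventually.of_forall fun v hv => ?_)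
    have h := ph_nonneg (u := v) hs hn
    rw [Real.norm_of_nonneg (by positivity)]
    exact bnd_pt ha' u hv (ph_nonneg hs hn) (ph_le hs)
  · exact Eventually.of_forall fun v => (ph_tendsto hs).mul_const _

lemma AA_nonneg (a : ℝ) {n : ℕ} (hn : 0 < n) {s₁ s₂ : ℝ}
    (h₁ : s₁ ∈ Ioo (0:ℝ) 1) (h₂ : s₂ ∈ Ioo (0:ℝ) 1) : 0 ≤ AA a n s₁ s₂ :=
  integral_nonneg fun u => mul_nonneg (ph_nonneg h₁ hn) (inner_nonneg a hn h₂ u)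

lemma AA_le {a : ℝ} (ha : -1 < a) (ha' : a < 0) {n : ℕ} (hn : 0 < n) {s₁ s₂ : ℝ}
    (h₁ : s₁ ∈ Ioo (0:ℝ) 1) (h₂ : s₂ ∈ Ioo (0:ℝ) 1) : AA a n s₁ s₂ ≤ 1 + 2 / (a + 1) := by
  have : ∫ u in Ioi (0:ℝ), Real.exp (-u) * (1 + 2 / (a + 1)) = 1 + 2 / (a + 1) := by
    rw [integral_mul_const, integral_exp_neg_Ioi_zero, one_mul]
  rw [← this]
  refine integral_mono_of_nonneg ?_ ((integrableOn_exp_neg_Ioi 0).mul_const _) ?_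
  · exact Eventually.of_forall fun u => mul_nonneg (ph_nonneg h₁ hn) (inner_nonneg a hn h₂ u)
  · exact Eventually.of_forall fun u => mul_le_mul (ph_le h₁) (inner_le ha ha' hn h₂ u)
      (inner_nonneg a hn h₂ u) (by positivity)

/-- Limit constant. -/
noncomputable def LL (a : ℝ) : ℝ :=
  ∫ u in Ioi (0:ℝ), Real.exp (-u) * ∫ v in Ioi (0:ℝ), Real.exp (-v) * |u - v| ^ a

lemma AA_tendsto {a : ℝ} (ha : -1 < a) (ha' : a < 0) {s₁ s₂ : ℝ}
    (h₁ : s₁ ∈ Ioo (0:ℝ) 1) (h₂ : s₂ ∈ Ioo (0:ℝ) 1) :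
    Tendsto (fun n => AA a n s₁ s₂) atTop (𝓝 (LL a)) := by
  refine tendsto_integral_filter_of_dominated_convergence
    (fun u => Real.exp (-u) * (1 + 2 / (a + 1))) ?_ ?_
    ((integrableOn_exp_neg_Ioi 0).mul_const _) ?_
  · refine Eventually.of_forall fun n => Measurable.aestronglyMeasurable ?_
    exact ((ph_meas n).comp (f := fun v : ℝ => (s₁, v)) (by fun_prop)).mul
      ((AA_inner_meas a n).measurable.comp (f := fun u : ℝ => (s₂, u)) (by fun_prop))
  · filter_upwards [eventually_gt_atTop 0] with n hn
    refine Eventually.of_forall fun u => ?_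
    rw [Real.norm_of_nonneg (mul_nonneg (ph_nonneg h₁ hn) (inner_nonneg a hn h₂ u))]
    exact mul_le_mul (ph_le h₁) (inner_le ha ha' hn h₂ u)
      (inner_nonneg a hn h₂ u) (by positivity)
  · exact Eventually.of_forall fun u => (ph_tendsto h₁).mul (inner_tendsto ha ha' h₂ u)

lemma exp_subst (F : ℝ → ℝ) :
    ∫ x in (0:ℝ)..1, F x = ∫ u in Ioi (0:ℝ), Real.exp (-u) * F (Real.exp (-u)) := by
  have himg : (fun u : ℝ => Real.exp (-u)) '' Ioi 0 = Ioo 0 1 := by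
    ext x
    constructor
    · rintro ⟨u, hu, rfl⟩
      exact ⟨Real.exp_pos _, by simpa using hu⟩
    · rintro ⟨h0, h1⟩
      exact ⟨-Real.log x, by simpa using Real.log_neg h0 h1, by simp [Real.exp_log h0]⟩
  have h := integral_image_eq_integral_abs_deriv_smul (s := Ioi (0:ℝ))
    (f := fun u : ℝ => Real.exp (-u)) (f' := fun u => -Real.exp (-u)) measurableSet_Ioi
    (fun u _ => by
      have := (hasDerivAt_neg u).exp
      simpa using this.hasDerivWithinAt) (fun u _ v _ h => by simpa using h) F
  rw [himg] at h
  rw [intervalIntegral.integral_of_le zero_le_one, integral_Ioc_eq_integral_Ioo, h]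
  simp

lemma LL_eq (a : ℝ) : ∫ x₁ in (0:ℝ)..1, ∫ x₂ in (0:ℝ)..1, |Real.log x₁ - Real.log x₂| ^ a = LL a := by
  rw [exp_subst]
  simp_rw [exp_subst (fun x₂ => |_ - Real.log x₂| ^ a), Real.log_exp]
  unfold LL
  congr 1; funext u
  congr 2; funext v
  congr 2
  rw [← abs_neg]; congr 1; ring

lemma base_integrable {a : ℝ} (ha : -1 < a) (ha' : a < 0) :
    IntegrableOn (fun s : ℝ => (1 - s) ^ a) (Ioo 0 1) := by
  refine ((abs_integrableOn ha ha' 1).mono_set Ioo_subset_Ioc_self).congr_fun ?_ measurableSet_Ioo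
  intro s hs
  simp only
  rw [abs_sub_comm, abs_of_pos (by linarith [hs.2])]

lemma main_tendsto {a : ℝ} (ha : -1 < a) (ha' : a < 0) :
    Tendsto (fun n => ∫ s₁ in Ioo (0:ℝ) 1, KK a n s₁ * ∫ s₂ in Ioo (0:ℝ) 1, KK a n s₂ * AA a n s₁ s₂)
      atTop (𝓝 (∫ s₁ in Ioo (0:ℝ) 1, (1 - s₁) ^ a * ∫ s₂ in Ioo (0:ℝ) 1, (1 - s₂) ^ a * LL a)) := by
  obtain ⟨C, hC, hK⟩ := KK_bound ha ha'
  have ha1 : 0 < a + 1 := by linarith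
  set M : ℝ := 1 + 2 / (a + 1) with hM
  have hM0 : 0 ≤ M := by positivity
  set B : ℝ := ∫ s in Ioo (0:ℝ) 1, C * (1 - s) ^ a * M with hB
  have hBi : IntegrableOn (fun s : ℝ => C * (1 - s) ^ a * M) (Ioo 0 1) :=
    ((base_integrable ha ha').const_mul C).mul_const M
  have pt : ∀ n : ℕ, 0 < n → ∀ s₁ ∈ Ioo (0:ℝ) 1, ∀ s₂ ∈ Ioo (0:ℝ) 1,
      KK a n s₂ * AA a n s₁ s₂ ≤ C * (1 - s₂) ^ a * M := by
    intro n hn s₁ h₁ s₂ h₂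
    have : 0 ≤ 1 - s₂ := by linarith [h₂.2]
    exact mul_le_mul (hK n s₂ h₂.2) (AA_le ha ha' hn h₁ h₂) (AA_nonneg a hn h₁ h₂) (by positivity)
  have pt0 : ∀ n : ℕ, 0 < n → ∀ s₁ ∈ Ioo (0:ℝ) 1, ∀ s₂ ∈ Ioo (0:ℝ) 1,
      0 ≤ KK a n s₂ * AA a n s₁ s₂ := fun n hn s₁ h₁ s₂ h₂ =>
    mul_nonneg (KK_nonneg a n s₂) (AA_nonneg a hn h₁ h₂)
  have in0 : ∀ n : ℕ, 0 < n → ∀ s₁ ∈ Ioo (0:ℝ) 1,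
      0 ≤ ∫ s₂ in Ioo (0:ℝ) 1, KK a n s₂ * AA a n s₁ s₂ := fun n hn s₁ h₁ =>
    setIntegral_nonneg measurableSet_Ioo (pt0 n hn s₁ h₁)
  have inB : ∀ n : ℕ, 0 < n → ∀ s₁ ∈ Ioo (0:ℝ) 1,
      ∫ s₂ in Ioo (0:ℝ) 1, KK a n s₂ * AA a n s₁ s₂ ≤ B := fun n hn s₁ h₁ =>
    integral_mono_of_nonneg
      ((ae_restrict_iff' measurableSet_Ioo).2 (Eventually.of_forall (pt0 n hn s₁ h₁))) hBi
      ((ae_restrict_iff' measurableSet_Ioo).2 (Eventually.of_forall (pt n hn s₁ h₁)))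
  refine tendsto_integral_filter_of_dominated_convergence (fun s => C * (1 - s) ^ a * B) ?_ ?_
    (((base_integrable ha ha').const_mul C).mul_const B) ?_
  · refine Eventually.of_forall fun n => StronglyMeasurable.aestronglyMeasurable ?_
    refine (KK_meas a n).mul ?_
    apply StronglyMeasurable.integral_prod_right (f := fun s₁ s₂ => KK a n s₂ * AA a n s₁ s₂)
    exact ((KK_meas a n).comp_measurable measurable_snd).mul (AA_meas a n)
  · filter_upwards [eventually_gt_atTop 0] with n hn
    refine (ae_restrict_iff' measurableSet_Ioo).2 (Eventually.of_forall fun s hs => ?_)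
    rw [Real.norm_of_nonneg (mul_nonneg (KK_nonneg a n s) (in0 n hn s hs))]
    have : 0 ≤ 1 - s := by linarith [hs.2]
    exact mul_le_mul (hK n s hs.2) (inB n hn s hs) (in0 n hn s hs) (by positivity)
  · refine (ae_restrict_iff' measurableSet_Ioo).2 (Eventually.of_forall fun s hs => ?_)
    refine (KK_tendsto ha ha' hs.2).mul ?_
    refine tendsto_integral_filter_of_dominated_convergence _ ?_ ?_ hBi ?_
    · refine Eventually.of_forall fun n => StronglyMeasurable.aestronglyMeasurable ?_
      exact (KK_meas a n).mul ((AA_meas a n).comp_measurable (g := fun t : ℝ => (s, t)) (by fun_prop))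
    · filter_upwards [eventually_gt_atTop 0] with n hn
      refine (ae_restrict_iff' measurableSet_Ioo).2 (Eventually.of_forall fun t ht => ?_)
      rw [Real.norm_of_nonneg (pt0 n hn s hs t ht)]
      exact pt n hn s hs t ht
    · refine (ae_restrict_iff' measurableSet_Ioo).2 (Eventually.of_forall fun t ht => ?_)
      exact (KK_tendsto ha ha' ht.2).mul (AA_tendsto ha ha' hs ht)

lemma int01 (F : ℝ → ℝ) : ∫ s in (0:ℝ)..1, F s = ∫ s in Ioo (0:ℝ) 1, F s := by
  rw [intervalIntegral.integral_of_le zero_le_one, integral_Ioc_eq_integral_Ioo]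

lemma main_eq (a : ℝ) {n : ℕ} (hn : 0 < n) :
    (n:ℝ) ^ (4 + a) *
        ∫ s₁ in (0:ℝ)..1, ∫ t₁ in (0:ℝ)..1, ∫ s₂ in (0:ℝ)..1, ∫ t₂ in (0:ℝ)..1,
          t₁ ^ n * t₂ ^ n *
            (∫ θ₁ in s₁..1, ∫ θ₂ in s₂..1, θ₁ ^ n * θ₂ ^ n * |θ₁ - θ₂| ^ a) *
            |t₁ - s₁| ^ a * |t₂ - s₂| ^ a
      = ∫ s₁ in Ioo (0:ℝ) 1, KK a n s₁ * ∫ s₂ in Ioo (0:ℝ) 1, KK a n s₂ * AA a n s₁ s₂ := by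
  have hn' : (0:ℝ) < n := by exact_mod_cast hn
  rw [int01, ← integral_const_mul]
  refine setIntegral_congr_fun measurableSet_Ioo fun s₁ h₁ => ?_
  beta_reduce
  set G : ℝ → ℝ := fun s₂ => ∫ θ₁ in s₁..1, ∫ θ₂ in s₂..1, θ₁ ^ n * θ₂ ^ n * |θ₁ - θ₂| ^ a with hG
  have e1 : ∀ t₁ : ℝ, (∫ s₂ in (0:ℝ)..1, ∫ t₂ in (0:ℝ)..1,
      t₁ ^ n * t₂ ^ n * G s₂ * |t₁ - s₁| ^ a * |t₂ - s₂| ^ a) =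
      (t₁ ^ n * |t₁ - s₁| ^ a) * ∫ s₂ in (0:ℝ)..1, G s₂ * ∫ t₂ in (0:ℝ)..1, t₂ ^ n * |t₂ - s₂| ^ a := by
    intro t₁
    rw [← intervalIntegral.integral_const_mul]
    congr 1; funext s₂
    rw [← intervalIntegral.integral_const_mul, ← intervalIntegral.integral_const_mul]
    congr 1; funext t₂
    ring
  have e2 : (∫ s₂ in Ioo (0:ℝ) 1, KK a n s₂ * AA a n s₁ s₂) =
      (n:ℝ) ^ (3 + a) * ∫ s₂ in (0:ℝ)..1, G s₂ * ∫ t₂ in (0:ℝ)..1, t₂ ^ n * |t₂ - s₂| ^ a := by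
    rw [int01, ← integral_const_mul]
    refine setIntegral_congr_fun measurableSet_Ioo fun s₂ h₂ => ?_
    beta_reduce
    rw [← AA_eq a hn h₁ h₂, KK, show (3:ℝ) + a = (2 + a) + 1 by ring, Real.rpow_add_one hn'.ne']
    ring
  change (n:ℝ) ^ (4 + a) * (∫ t₁ in (0:ℝ)..1, ∫ s₂ in (0:ℝ)..1, ∫ t₂ in (0:ℝ)..1,
      t₁ ^ n * t₂ ^ n * G s₂ * |t₁ - s₁| ^ a * |t₂ - s₂| ^ a) = _
  simp_rw [e1]
  rw [intervalIntegral.integral_mul_const, e2, KK, show (4:ℝ) + a = (3 + a) + 1 by ring,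
    Real.rpow_add_one hn'.ne']
  ring

/-- Identification of the asymptotic variance `σ²_{H,2}` for `H ∈ (1/2,1)`:
`H³(2H−1)³ n^{2+2H} ∫_{[0,1]⁴} t₁ⁿt₂ⁿ (∫_{s₁}^1∫_{s₂}^1 θ₁ⁿθ₂ⁿ|θ₁−θ₂|^{2H−2} dθ₁dθ₂)
|t₁−s₁|^{2H−2}|t₂−s₂|^{2H−2} ds₁dt₁ds₂dt₂ → σ²_{H,2}` as `n → ∞`. -/
theorem stmt14 (H : ℝ) (hH : H ∈ Set.Ioo (1/2 : ℝ) 1) :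
    Tendsto
      (fun n : ℕ => H ^ 3 * (2 * H - 1) ^ 3 * (n:ℝ) ^ (2 + 2 * H) *
        ∫ s₁ in (0:ℝ)..1, ∫ t₁ in (0:ℝ)..1, ∫ s₂ in (0:ℝ)..1, ∫ t₂ in (0:ℝ)..1,
          t₁ ^ n * t₂ ^ n *
            (∫ θ₁ in s₁..1, ∫ θ₂ in s₂..1, θ₁ ^ n * θ₂ ^ n * |θ₁ - θ₂| ^ (2 * H - 2)) *
            |t₁ - s₁| ^ (2 * H - 2) * |t₂ - s₂| ^ (2 * H - 2))
      atTop
      (nhds (H ^ 3 * (2 * H - 1) ^ 3 *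
        (∫ s₁ in (0:ℝ)..1, ∫ s₂ in (0:ℝ)..1, (1 - s₁) ^ (2 * H - 2) * (1 - s₂) ^ (2 * H - 2)) *
        (∫ x₁ in (0:ℝ)..1, ∫ x₂ in (0:ℝ)..1, |Real.log x₁ - Real.log x₂| ^ (2 * H - 2)))) := by
  have ha : -1 < 2 * H - 2 := by linarith [hH.1]
  have ha' : 2 * H - 2 < 0 := by linarith [hH.2]
  have h := (main_tendsto ha ha').const_mul (H ^ 3 * (2 * H - 1) ^ 3)
  have e : (∫ s₁ in Ioo (0:ℝ) 1, (1 - s₁) ^ (2 * H - 2) *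
      ∫ s₂ in Ioo (0:ℝ) 1, (1 - s₂) ^ (2 * H - 2) * LL (2 * H - 2)) =
      (∫ s₁ in (0:ℝ)..1, ∫ s₂ in (0:ℝ)..1, (1 - s₁) ^ (2 * H - 2) * (1 - s₂) ^ (2 * H - 2)) *
        LL (2 * H - 2) := by
    simp_rw [intervalIntegral.integral_const_mul, integral_mul_const, int01]
    rw [integral_mul_const]
    ring
  rw [LL_eq, mul_assoc _ (∫ s₁ in (0:ℝ)..1, ∫ s₂ in (0:ℝ)..1, _), ← e]
  refine h.congr' ?_
  filter_upwards [eventually_gt_atTop 0] with n hn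
  rw [← main_eq _ hn, show (4:ℝ) + (2 * H - 2) = 2 + 2 * H by ring, ← mul_assoc]
end

section
/- Let H ∈ (1/2, 1). Define C_n = n^{1+2H} H²(2H−1)² ∫_{[0,1]⁴} tⁿ ξⁿ θⁿ · 1_{[s,1]}(θ) · |t−s|^{2H−2} |ξ−θ|^{2H−2} dξ dθ ds dt. Then lim_{n→∞} C_n = H²(2H−1)·Γ(2H−1). -/
open Filter
open MeasureTheory

/-- Lebesgue measure on the unit interval. -/
noncomputable abbrev muI : Measure ℝ := volume.restrict (Set.Ioc (0:ℝ) 1)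

lemma ae_muI : ∀ᵐ x ∂muI, x ∈ Set.Ioc (0:ℝ) 1 :=
  ae_restrict_mem measurableSet_Ioc

lemma beta_tendsto (s : ℝ) (hs : 0 < s) :
    Tendsto (fun n : ℕ => (n:ℝ) ^ s * ∫ x in (0:ℝ)..1, x ^ n * (1 - x) ^ (s - 1))
      atTop (nhds (Real.Gamma s)) := by
  have h := Complex.GammaSeq_tendsto_Gamma (s : ℂ)
  rw [Complex.Gamma_ofReal] at h
  have h2 := (Complex.continuous_re.tendsto _).comp h
  rw [Complex.ofReal_re] at h2
  refine h2.congr fun n => ?_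
  simp only [Function.comp]
  rw [Complex.GammaSeq_eq_betaIntegral_of_re_pos (by simpa using hs)]
  have e1 : (∫ x in (0:ℝ)..1, x ^ n * (1 - x) ^ (s - 1)) =
      ∫ x in (0:ℝ)..1, x ^ (s - 1) * (1 - x) ^ n := by
    have := intervalIntegral.integral_comp_sub_left (a := 0) (b := 1)
      (fun x : ℝ => x ^ (s - 1) * (1 - x) ^ n) 1
    simp only [sub_sub_cancel, sub_self, sub_zero] at this
    rw [← this]
    exact intervalIntegral.integral_congr fun x _ => mul_comm _ _
  have e2 : Complex.betaIntegral (s:ℂ) ((n:ℂ) + 1) =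
      ((∫ x in (0:ℝ)..1, x ^ (s - 1) * (1 - x) ^ n : ℝ) : ℂ) := by
    rw [Complex.betaIntegral, ← intervalIntegral.integral_ofReal]
    refine intervalIntegral.integral_congr fun x hx => ?_
    rw [Set.uIcc_of_le zero_le_one] at hx
    simp only [add_sub_cancel_right, Complex.cpow_natCast]
    push_cast
    rw [Complex.ofReal_cpow hx.1]
    push_cast
    rfl
  rw [e1, e2]
  have e3 : ((n:ℂ)) ^ (s:ℂ) = (((n:ℝ) ^ s : ℝ) : ℂ) := by
    rw [Complex.ofReal_cpow (Nat.cast_nonneg n)]; simp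
  rw [e3, ← Complex.ofReal_mul, Complex.ofReal_re]

lemma sub_rpow_int (a y : ℝ) (ha : -1 < a) (u v : ℝ) :
    IntervalIntegrable (fun x => (y - x) ^ a) volume u v := by
  have := (intervalIntegral.intervalIntegrable_rpow' (a := y - u) (b := y - v) ha).comp_sub_left y
    (by simp)
  simpa using this

lemma rpow_sub_int (a y : ℝ) (ha : -1 < a) (u v : ℝ) :
    IntervalIntegrable (fun x => (x - y) ^ a) volume u v := by
  have := (intervalIntegral.intervalIntegrable_rpow' (a := u - y) (b := v - y) ha).comp_sub_right y
    (by simp)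
  simpa using this

lemma ker_int (a y : ℝ) (ha : -1 < a) (hy : y ∈ Set.Icc (0:ℝ) 1) :
    Integrable (fun x => |x - y| ^ a) muI ∧
      ∫ x, |x - y| ^ a ∂muI = (y ^ (a + 1) + (1 - y) ^ (a + 1)) / (a + 1) := by
  have e1 : Set.EqOn (fun x => (y - x) ^ a) (fun x => |x - y| ^ a) (Set.uIcc 0 y) := by
    intro x hx
    rw [Set.uIcc_of_le hy.1] at hx
    simp only
    rw [abs_sub_comm, abs_of_nonneg (by linarith [hx.2])]
  have e2 : Set.EqOn (fun x => (x - y) ^ a) (fun x => |x - y| ^ a) (Set.uIcc y 1) := by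
    intro x hx
    rw [Set.uIcc_of_le hy.2] at hx
    simp only
    rw [abs_of_nonneg (by linarith [hx.1])]
  have i1 : IntervalIntegrable (fun x => |x - y| ^ a) volume 0 y :=
    (sub_rpow_int a y ha 0 y).congr (e1.mono Set.uIoc_subset_uIcc)
  have i2 : IntervalIntegrable (fun x => |x - y| ^ a) volume y 1 :=
    (rpow_sub_int a y ha y 1).congr (e2.mono Set.uIoc_subset_uIcc)
  constructor
  · exact (intervalIntegrable_iff_integrableOn_Ioc_of_le zero_le_one).1 (i1.trans i2)
  · rw [← intervalIntegral.integral_of_le zero_le_one,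
      ← intervalIntegral.integral_add_adjacent_intervals i1 i2,
      ← intervalIntegral.integral_congr e1, ← intervalIntegral.integral_congr e2,
      intervalIntegral.integral_comp_sub_left (fun x => x ^ a) y,
      intervalIntegral.integral_comp_sub_right (fun x => x ^ a) y,
      integral_rpow (Or.inl ha), integral_rpow (Or.inl ha)]
    simp only [sub_self, sub_zero, Real.zero_rpow (by linarith : a + 1 ≠ 0)]
    ring

lemma ker_le (a y : ℝ) (ha : -1 < a) (hy : y ∈ Set.Icc (0:ℝ) 1) :
    ∫ x, |x - y| ^ a ∂muI ≤ 2 / (a + 1) := by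
  rw [(ker_int a y ha hy).2]
  have : 0 < a + 1 := by linarith
  have h1 := Real.rpow_le_one hy.1 hy.2 this.le
  have h2 := Real.rpow_le_one (sub_nonneg.2 hy.2) (by linarith [hy.1]) this.le
  gcongr
  linarith

lemma ker_prod (a : ℝ) (ha : -1 < a) :
    Integrable (fun p : ℝ × ℝ => |p.1 - p.2| ^ a) (muI.prod muI) := by
  have hm : Measurable (fun p : ℝ × ℝ => |p.1 - p.2| ^ a) := by
    have : Measurable (fun p : ℝ × ℝ => |p.1 - p.2|) := by fun_prop
    exact this.pow_const a
  rw [integrable_prod_iff' hm.aestronglyMeasurable]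
  constructor
  · filter_upwards [ae_muI] with y hy
    exact (ker_int a y ha ⟨hy.1.le, hy.2⟩).1
  · have hm2 : AEStronglyMeasurable (fun y => ∫ x, ‖|x - y| ^ a‖ ∂muI) muI := by
      have : StronglyMeasurable (fun p : ℝ × ℝ => ‖|p.2 - p.1| ^ a‖) :=
        (hm.comp measurable_swap).norm.stronglyMeasurable
      exact (this.integral_prod_right' (ν := muI)).aestronglyMeasurable
    refine Integrable.of_bound hm2 (2 / (a + 1)) ?_
    filter_upwards [ae_muI] with y hy
    have e : (fun x => ‖|x - y| ^ a‖) = fun x => |x - y| ^ a := by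
      funext x; exact Real.norm_of_nonneg (by positivity)
    rw [e, Real.norm_of_nonneg (integral_nonneg fun x => by positivity)]
    exact ker_le a y ha ⟨hy.1.le, hy.2⟩

/-- bounded times kernel is integrable -/
lemma ker_prod_bdd (a : ℝ) (ha : -1 < a) (g : ℝ × ℝ → ℝ) (hg : Measurable g) (c : ℝ)
    (hb : ∀ x ∈ Set.Ioc (0:ℝ) 1, ∀ y ∈ Set.Ioc (0:ℝ) 1, |g (x, y)| ≤ c) :
    Integrable (fun p : ℝ × ℝ => g p * |p.1 - p.2| ^ a) (muI.prod muI) := by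
  refine (ker_prod a ha).bdd_mul (c := c) hg.aestronglyMeasurable ?_
  have : ∀ᵐ p ∂(muI.prod muI), p ∈ Set.Ioc (0:ℝ) 1 ×ˢ Set.Ioc (0:ℝ) 1 := by
    rw [Measure.prod_restrict]
    exact ae_restrict_mem (measurableSet_Ioc.prod measurableSet_Ioc)
  filter_upwards [this] with p hp
  exact hb p.1 hp.1 p.2 hp.2

lemma inner_tri (a : ℝ) (n : ℕ) (θ : ℝ) (hθ : θ ∈ Set.Ioc (0:ℝ) 1) :
    ∫ ξ, (if ξ ≤ θ then θ ^ n * ξ ^ n else 0) * |θ - ξ| ^ a ∂muI =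
      θ ^ (2 * n + 1 + a) * ∫ x in (0:ℝ)..1, x ^ n * (1 - x) ^ a := by
  have e1 : (fun ξ => (if ξ ≤ θ then θ ^ n * ξ ^ n else 0) * |θ - ξ| ^ a) =
      Set.indicator (Set.Iic θ) (fun ξ => θ ^ n * (ξ ^ n * (θ - ξ) ^ a)) := by
    funext ξ
    by_cases h : ξ ≤ θ
    · rw [Set.indicator_of_mem (show ξ ∈ Set.Iic θ from h), if_pos h,
        abs_of_nonneg (by linarith)]
      ring
    · rw [Set.indicator_of_notMem (show ξ ∉ Set.Iic θ from h), if_neg h, zero_mul]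
  have e2 : Set.Iic θ ∩ Set.Ioc (0:ℝ) 1 = Set.Ioc 0 θ := by
    ext x
    simp only [Set.mem_inter_iff, Set.mem_Iic, Set.mem_Ioc]
    constructor
    · rintro ⟨h1, h2, h3⟩; exact ⟨h2, h1⟩
    · rintro ⟨h1, h2⟩; exact ⟨h2, h1, h2.trans hθ.2⟩
  rw [e1, integral_indicator measurableSet_Iic, Measure.restrict_restrict measurableSet_Iic, e2,
    ← intervalIntegral.integral_of_le hθ.1.le, intervalIntegral.integral_const_mul]
  have h := intervalIntegral.integral_comp_mul_left (a := 0) (b := 1)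
    (fun ξ => ξ ^ n * (θ - ξ) ^ a) hθ.1.ne'
  simp only [mul_zero, mul_one, smul_eq_mul] at h
  have h3 : (∫ ξ in (0:ℝ)..θ, ξ ^ n * (θ - ξ) ^ a) =
      θ * ∫ x in (0:ℝ)..1, (θ * x) ^ n * (θ - θ * x) ^ a := by
    rw [h, ← mul_assoc, mul_inv_cancel₀ hθ.1.ne', one_mul]
  have h4 : (∫ x in (0:ℝ)..1, (θ * x) ^ n * (θ - θ * x) ^ a) =
      (θ ^ n * θ ^ a) * ∫ x in (0:ℝ)..1, x ^ n * (1 - x) ^ a := by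
    rw [← intervalIntegral.integral_const_mul]
    refine intervalIntegral.integral_congr fun x hx => ?_
    rw [Set.uIcc_of_le zero_le_one] at hx
    rw [show θ - θ * x = θ * (1 - x) by ring, mul_pow,
      Real.mul_rpow hθ.1.le (sub_nonneg.2 hx.2)]
    ring
  rw [h3, h4]
  have h5 : θ ^ (2 * n + 1 + a) = θ ^ n * (θ * (θ ^ n * θ ^ a)) := by
    rw [Real.rpow_add hθ.1, show (2 * (n:ℝ) + 1) = ((2 * n + 1 : ℕ) : ℝ) by push_cast; ring,
      Real.rpow_natCast]
    ring
  rw [h5]; ring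

lemma A_eq (a : ℝ) (ha : -1 < a) (ha0 : a < 0) (n : ℕ) :
    ∫ θ, ∫ ξ, θ ^ n * ξ ^ n * |θ - ξ| ^ a ∂muI ∂muI =
      2 / (2 * n + 2 + a) * ∫ x in (0:ℝ)..1, x ^ n * (1 - x) ^ a := by
  set w : ℝ → ℝ → ℝ := fun θ ξ => (if ξ ≤ θ then θ ^ n * ξ ^ n else 0) * |θ - ξ| ^ a with hw
  have hmeas : Measurable (fun p : ℝ × ℝ => if p.2 ≤ p.1 then p.1 ^ n * p.2 ^ n else 0) :=
    Measurable.ite (measurableSet_le measurable_snd measurable_fst) (by fun_prop) (by fun_prop)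
  have hwi : Integrable (Function.uncurry w) (muI.prod muI) := by
    refine ker_prod_bdd a ha _ hmeas 1 ?_
    intro x hx y hy
    simp only
    have h1 := pow_le_one₀ (n := n) hx.1.le hx.2
    have h2 := pow_le_one₀ (n := n) hy.1.le hy.2
    have h3 := pow_nonneg hx.1.le n
    have h4 := pow_nonneg hy.1.le n
    split_ifs
    · rw [abs_of_nonneg (by positivity)]; exact mul_le_one₀ h1 h4 h2
    · simp
  have hwi' : Integrable (Function.uncurry fun θ ξ => w ξ θ) (muI.prod muI) := hwi.swap
  have e1 : ∀ θ ξ, θ ^ n * ξ ^ n * |θ - ξ| ^ a = w θ ξ + w ξ θ := by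
    intro θ ξ
    simp only [hw]
    rcases lt_trichotomy θ ξ with h | h | h
    · rw [if_neg (not_le.2 h), if_pos h.le, abs_sub_comm θ ξ]; ring
    · subst h; simp [Real.zero_rpow ha0.ne]
    · rw [if_neg (not_le.2 h), if_pos h.le]; ring
  have e2 : ∫ θ, ∫ ξ, w θ ξ ∂muI ∂muI =
      1 / (2 * n + 2 + a) * ∫ x in (0:ℝ)..1, x ^ n * (1 - x) ^ a := by
    have : ∫ θ, ∫ ξ, w θ ξ ∂muI ∂muI =
        ∫ θ, θ ^ (2 * n + 1 + a) * (∫ x in (0:ℝ)..1, x ^ n * (1 - x) ^ a) ∂muI := by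
      refine integral_congr_ae ?_
      filter_upwards [ae_muI] with θ hθ
      exact inner_tri a n θ hθ
    have hn : (0:ℝ) ≤ n := Nat.cast_nonneg n
    rw [this, integral_mul_const, ← intervalIntegral.integral_of_le zero_le_one,
      integral_rpow (Or.inl (by linarith)), Real.one_rpow, Real.zero_rpow (by linarith)]
    congr 1
    ring
  have e3 : ∫ θ, ∫ ξ, θ ^ n * ξ ^ n * |θ - ξ| ^ a ∂muI ∂muI =
      ∫ θ, ((∫ ξ, w θ ξ ∂muI) + ∫ ξ, w ξ θ ∂muI) ∂muI := by
    refine integral_congr_ae ?_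
    filter_upwards [hwi.prod_right_ae, hwi'.prod_right_ae] with θ h1 h2
    have h1' : Integrable (fun ξ => w θ ξ) muI := h1
    have h2' : Integrable (fun ξ => w ξ θ) muI := h2
    rw [← integral_add h1' h2']
    exact integral_congr_ae (Eventually.of_forall fun ξ => e1 θ ξ)
  have j1 : Integrable (fun θ => ∫ ξ, w θ ξ ∂muI) muI := hwi.integral_prod_left
  have j2 : Integrable (fun θ => ∫ ξ, w ξ θ ∂muI) muI := hwi'.integral_prod_left
  rw [e3, integral_add j1 j2, ← integral_integral_swap hwi, e2]
  ring

lemma A_tendsto (a : ℝ) (ha : -1 < a) (ha0 : a < 0) :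
    Tendsto (fun n : ℕ => (n:ℝ) ^ (a + 2) * ∫ θ, ∫ ξ, θ ^ n * ξ ^ n * |θ - ξ| ^ a ∂muI ∂muI)
      atTop (nhds (Real.Gamma (a + 1))) := by
  have h1 := beta_tendsto (a + 1) (by linarith)
  have h2 : Tendsto (fun n : ℕ => 2 / (2 + (2 + a) * ((n:ℝ))⁻¹)) atTop (nhds (2 / (2 + (2 + a) * 0))) := by
    refine Tendsto.div tendsto_const_nhds ?_ (by simp)
    exact tendsto_const_nhds.add (tendsto_const_nhds.mul tendsto_inv_atTop_nhds_zero_nat)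
  have h3 := h2.mul h1
  simp only [mul_zero, add_zero, add_sub_cancel_right, ne_eq, OfNat.ofNat_ne_zero,
    not_false_eq_true, div_self, one_mul] at h3
  refine h3.congr' ?_
  filter_upwards [eventually_gt_atTop 0] with n hn
  have hn' : (0:ℝ) < n := by exact_mod_cast hn
  rw [A_eq a ha ha0 n, show a + 2 = (a + 1) + 1 by ring, Real.rpow_add_one hn'.ne' (a + 1)]
  have : 2 * (n:ℝ) + 2 + a ≠ 0 := by linarith
  have e : 2 / (2 + (2 + a) * ((n:ℝ))⁻¹) = n * (2 / (2 * n + 2 + a)) := by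
    rw [show 2 + (2 + a) * ((n:ℝ))⁻¹ = (2 * n + 2 + a) / n by field_simp; ring]
    field_simp
  rw [e]; ring

lemma B_eq (a : ℝ) (ha : -1 < a) (n : ℕ) :
    ∫ t, ∫ s, t ^ n * |t - s| ^ a ∂muI ∂muI =
      (1 / (n + a + 2) + ∫ x in (0:ℝ)..1, x ^ n * (1 - x) ^ (a + 2 - 1)) / (a + 1) := by
  have hn : (0:ℝ) ≤ n := Nat.cast_nonneg n
  have e1 : ∫ t, ∫ s, t ^ n * |t - s| ^ a ∂muI ∂muI =
      ∫ t, (t ^ (n + (a + 1)) + t ^ n * (1 - t) ^ (a + 1)) / (a + 1) ∂muI := by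
    refine integral_congr_ae ?_
    filter_upwards [ae_muI] with t ht
    rw [integral_const_mul]
    simp only [abs_sub_comm t]
    rw [(ker_int a t ha ⟨ht.1.le, ht.2⟩).2, Real.rpow_add ht.1 (n:ℝ), Real.rpow_natCast]
    ring
  have i1 : IntervalIntegrable (fun t : ℝ => t ^ (n + (a + 1))) volume 0 1 :=
    intervalIntegral.intervalIntegrable_rpow' (by linarith)
  have i2 : IntervalIntegrable (fun t : ℝ => t ^ n * (1 - t) ^ (a + 1)) volume 0 1 :=
    (sub_rpow_int (a + 1) 1 (by linarith) 0 1).continuousOn_mul (by fun_prop)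
  rw [e1, integral_div, ← intervalIntegral.integral_of_le zero_le_one,
    intervalIntegral.integral_add i1 i2, integral_rpow (Or.inl (by linarith)),
    Real.one_rpow, Real.zero_rpow (by linarith), show a + 2 - 1 = a + 1 by ring]
  rw [show (n:ℝ) + (a + 1) + 1 = n + a + 2 by ring, sub_zero]

lemma B_tendsto (a : ℝ) (ha : -1 < a) :
    Tendsto (fun n : ℕ => (n:ℝ) * ∫ t, ∫ s, t ^ n * |t - s| ^ a ∂muI ∂muI)
      atTop (nhds (1 / (a + 1))) := by
  have h1 := beta_tendsto (a + 2) (by linarith)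
  have h0 : Tendsto (fun n : ℕ => ((n:ℝ)) ^ (-(a + 1))) atTop (nhds 0) :=
    (tendsto_rpow_neg_atTop (by linarith)).comp tendsto_natCast_atTop_atTop
  have h2 : Tendsto (fun n : ℕ => 1 / (1 + (2 + a) * ((n:ℝ))⁻¹)) atTop (nhds (1 / (1 + (2 + a) * 0))) := by
    refine Tendsto.div tendsto_const_nhds ?_ (by simp)
    exact tendsto_const_nhds.add (tendsto_const_nhds.mul tendsto_inv_atTop_nhds_zero_nat)
  have h3 := (h2.add (h0.mul h1)).div_const (a + 1)
  simp only [mul_zero, add_zero, zero_mul, div_one] at h3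
  refine h3.congr' ?_
  filter_upwards [eventually_gt_atTop 0] with n hn
  have hn' : (0:ℝ) < n := by exact_mod_cast hn
  rw [B_eq a ha n]
  have : (n:ℝ) + a + 2 ≠ 0 := by linarith
  have e : 1 / (1 + (2 + a) * ((n:ℝ))⁻¹) = n * (1 / (n + a + 2)) := by
    rw [show 1 + (2 + a) * ((n:ℝ))⁻¹ = (n + a + 2) / n by field_simp; ring]
    field_simp
  have e2 : (n:ℝ) ^ (-(a + 1)) * (n:ℝ) ^ (a + 2) = n := by
    rw [← Real.rpow_add hn']
    rw [show -(a + 1) + (a + 2) = 1 by ring, Real.rpow_one]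
  rw [e, ← mul_assoc ((n:ℝ) ^ (-(a + 1))), e2]; ring

/-- uniform bound for the inner integral -/
noncomputable def Mbd (a : ℝ) (n : ℕ) : ℝ :=
  (1 / ((n:ℝ) + 1)) ^ (a - (a - 1) / 2) * (2 / ((a - 1) / 2 + 1)) +
    (1 / ((n:ℝ) + 1)) ^ a * (1 / ((n:ℝ) + 1))

lemma Mbd_nonneg (a : ℝ) (ha : -1 < a) (n : ℕ) : 0 ≤ Mbd a n := by
  have : 0 < (a - 1) / 2 + 1 := by linarith
  unfold Mbd
  positivity

lemma Mbd_tendsto (a : ℝ) (ha : -1 < a) : Tendsto (Mbd a) atTop (nhds 0) := by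
  have hd : Tendsto (fun n : ℕ => 1 / ((n:ℝ) + 1)) atTop (nhds 0) :=
    tendsto_one_div_add_atTop_nhds_zero_nat
  have key : ∀ c : ℝ, 0 < c → Tendsto (fun n : ℕ => (1 / ((n:ℝ) + 1)) ^ c) atTop (nhds 0) := by
    intro c hc
    have := hd.rpow_const (p := c) (Or.inr hc.le)
    rwa [Real.zero_rpow hc.ne'] at this
  have h1 := (key (a - (a - 1) / 2) (by linarith)).mul_const (2 / ((a - 1) / 2 + 1))
  have h2 := key (a + 1) (by linarith)
  have h3 := h1.add h2
  simp only [zero_mul, add_zero] at h3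
  refine h3.congr fun n => ?_
  unfold Mbd
  rw [Real.rpow_add_one (by positivity)]

lemma G_int (a : ℝ) (ha : -1 < a) (n : ℕ) (θ : ℝ) (hθ : θ ∈ Set.Icc (0:ℝ) 1) :
    Integrable (fun ξ => ξ ^ n * |ξ - θ| ^ a) muI := by
  refine (ker_int a θ ha hθ).1.bdd_mul (c := 1) (by fun_prop) ?_
  filter_upwards [ae_muI] with ξ hξ
  rw [Real.norm_of_nonneg (pow_nonneg hξ.1.le n)]
  exact pow_le_one₀ hξ.1.le hξ.2

lemma pow_integral (n : ℕ) : ∫ ξ, ξ ^ n ∂muI = 1 / ((n:ℝ) + 1) := by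
  rw [← intervalIntegral.integral_of_le zero_le_one, integral_pow]
  simp

lemma pow_int (n : ℕ) : Integrable (fun ξ : ℝ => ξ ^ n) muI :=
  (intervalIntegrable_iff_integrableOn_Ioc_of_le zero_le_one).1
    ((by fun_prop : Continuous fun ξ : ℝ => ξ ^ n).intervalIntegrable 0 1)

lemma G_le (a : ℝ) (ha : -1 < a) (ha0 : a < 0) (n : ℕ) (θ : ℝ) (hθ : θ ∈ Set.Icc (0:ℝ) 1) :
    ∫ ξ, ξ ^ n * |ξ - θ| ^ a ∂muI ≤ Mbd a n := by
  unfold Mbd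
  set b := (a - 1) / 2 with hb
  have hb1 : -1 < b := by rw [hb]; linarith
  have hba : b < a := by rw [hb]; linarith
  set δ := 1 / ((n:ℝ) + 1) with hδ
  have hδ0 : 0 < δ := by rw [hδ]; positivity
  have i1 := (ker_int b θ hb1 hθ).1.const_mul (δ ^ (a - b))
  have i2 := (pow_int n).const_mul (δ ^ a)
  calc ∫ ξ, ξ ^ n * |ξ - θ| ^ a ∂muI
      ≤ ∫ ξ, (δ ^ (a - b) * |ξ - θ| ^ b + δ ^ a * ξ ^ n) ∂muI := by
        refine integral_mono_ae (G_int a ha n θ hθ) (i1.add i2) ?_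
        filter_upwards [ae_muI] with ξ hξ
        have h1 := pow_le_one₀ (n := n) hξ.1.le hξ.2
        have h0 := pow_nonneg hξ.1.le n
        have hx := abs_nonneg (ξ - θ)
        generalize |ξ - θ| = x at hx
        have p1 : 0 ≤ δ ^ (a - b) * x ^ b := by positivity
        have p2 : 0 ≤ δ ^ a * ξ ^ n := by positivity
        show ξ ^ n * x ^ a ≤ δ ^ (a - b) * x ^ b + δ ^ a * ξ ^ n
        rcases hx.eq_or_lt with h | h
        · have hz : x ^ a = 0 := by rw [← h, Real.zero_rpow ha0.ne]
          rw [hz, mul_zero]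
          linarith
        · rcases le_total x δ with h' | h'
          · have e : x ^ a = x ^ (a - b) * x ^ b := by
              rw [← Real.rpow_add h]; ring_nf
            have l1 : x ^ (a - b) ≤ δ ^ (a - b) := Real.rpow_le_rpow hx h' (by linarith)
            have l2 : x ^ a ≤ δ ^ (a - b) * x ^ b := by
              rw [e]; gcongr
            have l3 : ξ ^ n * x ^ a ≤ 1 * x ^ a := by gcongr
            linarith
          · have l1 : x ^ a ≤ δ ^ a := Real.rpow_le_rpow_of_nonpos hδ0 h' ha0.le
            have l2 : ξ ^ n * x ^ a ≤ ξ ^ n * δ ^ a := by gcongr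
            linarith
    _ = δ ^ (a - b) * (∫ ξ, |ξ - θ| ^ b ∂muI) + δ ^ a * δ := by
        rw [integral_add i1 i2, integral_const_mul, integral_const_mul, pow_integral]
    _ ≤ _ := by
        gcongr
        exact ker_le b θ hb1 hθ

/-- the weighted inner integral -/
noncomputable def gfun (a : ℝ) (n : ℕ) (θ : ℝ) : ℝ := θ ^ n * ∫ ξ, ξ ^ n * |ξ - θ| ^ a ∂muI

/-- the tail integral -/
noncomputable def Ffun (a : ℝ) (n : ℕ) (s : ℝ) : ℝ :=
  ∫ θ, Set.indicator (Set.Icc s 1) (gfun a n) θ ∂muI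

/-- the full double integral -/
noncomputable def Aint (a : ℝ) (n : ℕ) : ℝ :=
  ∫ θ, ∫ ξ, θ ^ n * ξ ^ n * |θ - ξ| ^ a ∂muI ∂muI

lemma gfun_eq (a : ℝ) (n : ℕ) (θ : ℝ) :
    gfun a n θ = ∫ ξ, θ ^ n * ξ ^ n * |θ - ξ| ^ a ∂muI := by
  unfold gfun
  rw [← integral_const_mul]
  refine integral_congr_ae (Eventually.of_forall fun ξ => ?_)
  simp only [abs_sub_comm θ]
  ring

lemma pp_int (a : ℝ) (ha : -1 < a) (n : ℕ) :
    Integrable (fun p : ℝ × ℝ => p.1 ^ n * p.2 ^ n * |p.1 - p.2| ^ a) (muI.prod muI) := by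
  refine ker_prod_bdd a ha (fun p => p.1 ^ n * p.2 ^ n) (by fun_prop) 1 ?_
  intro x hx y hy
  have h1 := pow_le_one₀ (n := n) hx.1.le hx.2
  have h2 := pow_le_one₀ (n := n) hy.1.le hy.2
  have h3 := pow_nonneg hx.1.le n
  have h4 := pow_nonneg hy.1.le n
  rw [abs_of_nonneg (by positivity)]
  exact mul_le_one₀ h1 h4 h2

lemma gfun_int (a : ℝ) (ha : -1 < a) (n : ℕ) : Integrable (gfun a n) muI := by
  have := (pp_int a ha n).integral_prod_left
  exact this.congr (Eventually.of_forall fun θ => (gfun_eq a n θ).symm)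

lemma gfun_nonneg (a : ℝ) (n : ℕ) (θ : ℝ) (hθ : 0 ≤ θ) : 0 ≤ gfun a n θ := by
  refine mul_nonneg (pow_nonneg hθ n) (integral_nonneg_of_ae ?_)
  filter_upwards [ae_muI] with ξ hξ
  exact mul_nonneg (pow_nonneg hξ.1.le n) (by positivity)

lemma A_eq_g (a : ℝ) (n : ℕ) : Aint a n = ∫ θ, gfun a n θ ∂muI :=
  integral_congr_ae (Eventually.of_forall fun θ => (gfun_eq a n θ).symm)

lemma F_antitone (a : ℝ) (ha : -1 < a) (n : ℕ) : Antitone (Ffun a n) := by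
  intro s s' hs
  refine integral_mono_ae ((gfun_int a ha n).indicator measurableSet_Icc)
    ((gfun_int a ha n).indicator measurableSet_Icc) ?_
  filter_upwards [ae_muI] with θ hθ
  by_cases h : θ ∈ Set.Icc s' 1
  · rw [Set.indicator_of_mem h, Set.indicator_of_mem (Set.Icc_subset_Icc_left hs h)]
  · rw [Set.indicator_of_notMem h]
    by_cases h' : θ ∈ Set.Icc s 1
    · rw [Set.indicator_of_mem h']; exact gfun_nonneg a n θ hθ.1.le
    · rw [Set.indicator_of_notMem h']

lemma F_nonneg (a : ℝ) (n : ℕ) (s : ℝ) : 0 ≤ Ffun a n s := by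
  refine integral_nonneg_of_ae ?_
  filter_upwards [ae_muI] with θ hθ
  by_cases h : θ ∈ Set.Icc s 1
  · rw [Set.indicator_of_mem h]; exact gfun_nonneg a n θ hθ.1.le
  · rw [Set.indicator_of_notMem h]; rfl

lemma F_le (a : ℝ) (ha : -1 < a) (n : ℕ) (s : ℝ) : Ffun a n s ≤ Aint a n := by
  rw [A_eq_g]
  refine integral_mono_ae ((gfun_int a ha n).indicator measurableSet_Icc) (gfun_int a ha n) ?_
  filter_upwards [ae_muI] with θ hθ
  by_cases h : θ ∈ Set.Icc s 1
  · rw [Set.indicator_of_mem h]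
  · rw [Set.indicator_of_notMem h]; exact gfun_nonneg a n θ hθ.1.le

lemma le_F (a : ℝ) (ha : -1 < a) (ha0 : a < 0) (n : ℕ) (s : ℝ) (hs : s ∈ Set.Ioc (0:ℝ) 1) :
    Aint a n - Mbd a n / (n + 1) * s ^ n ≤ Ffun a n s := by
  have i1 : Integrable (Set.indicator (Set.Icc s 1) (gfun a n)) muI :=
    (gfun_int a ha n).indicator measurableSet_Icc
  have i2 : Integrable (Set.indicator (Set.Iic s) (fun θ => Mbd a n * θ ^ n)) muI :=
    ((pow_int n).const_mul _).indicator measurableSet_Iic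
  have e2 : Set.Iic s ∩ Set.Ioc (0:ℝ) 1 = Set.Ioc 0 s := by
    ext x
    simp only [Set.mem_inter_iff, Set.mem_Iic, Set.mem_Ioc]
    constructor
    · rintro ⟨h1, h2, h3⟩; exact ⟨h2, h1⟩
    · rintro ⟨h1, h2⟩; exact ⟨h2, h1, h2.trans hs.2⟩
  have e3 : ∫ θ, Set.indicator (Set.Iic s) (fun θ => Mbd a n * θ ^ n) θ ∂muI =
      Mbd a n * (s ^ (n + 1) / (n + 1)) := by
    rw [integral_indicator measurableSet_Iic, Measure.restrict_restrict measurableSet_Iic, e2,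
      ← intervalIntegral.integral_of_le hs.1.le, intervalIntegral.integral_const_mul, integral_pow]
    simp
  have h1 : Aint a n ≤ Ffun a n s + Mbd a n * (s ^ (n + 1) / (n + 1)) := by
    rw [A_eq_g, ← e3, Ffun, ← integral_add i1 i2]
    refine integral_mono_ae (gfun_int a ha n) (i1.add i2) ?_
    filter_upwards [ae_muI] with θ hθ
    have hM := Mbd_nonneg a ha n
    have hp := pow_nonneg hθ.1.le n
    have hg : gfun a n θ ≤ Mbd a n * θ ^ n := by
      unfold gfun
      rw [mul_comm]
      exact mul_le_mul_of_nonneg_right (G_le a ha ha0 n θ ⟨hθ.1.le, hθ.2⟩) hp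
    have hg0 := gfun_nonneg a n θ hθ.1.le
    by_cases h : s ≤ θ
    · rw [Set.indicator_of_mem (show θ ∈ Set.Icc s 1 from ⟨h, hθ.2⟩)]
      have : 0 ≤ Set.indicator (Set.Iic s) (fun θ => Mbd a n * θ ^ n) θ := by
        by_cases h' : θ ∈ Set.Iic s
        · rw [Set.indicator_of_mem h']; positivity
        · rw [Set.indicator_of_notMem h']
      linarith
    · rw [Set.indicator_of_notMem (show θ ∉ Set.Icc s 1 from fun h' => h h'.1),
        Set.indicator_of_mem (show θ ∈ Set.Iic s from (not_le.1 h).le)]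
      linarith
  have h2 : s ^ (n + 1) ≤ s ^ n := pow_le_pow_of_le_one hs.1.le hs.2 (Nat.le_succ n)
  have h3 : Mbd a n * (s ^ (n + 1) / (n + 1)) ≤ Mbd a n * (s ^ n / (n + 1)) := by
    have hM := Mbd_nonneg a ha n
    gcongr
  have h4 : Mbd a n * (s ^ n / (n + 1)) = Mbd a n / (n + 1) * s ^ n := by ring
  linarith

/-- the quadruple integral -/
noncomputable def Iint (a : ℝ) (n : ℕ) : ℝ :=
  ∫ t, ∫ s, t ^ n * Ffun a n s * |t - s| ^ a ∂muI ∂muI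

lemma dbl_mono (f g : ℝ → ℝ → ℝ) (hf : Integrable (Function.uncurry f) (muI.prod muI))
    (hg : Integrable (Function.uncurry g) (muI.prod muI))
    (h : ∀ x ∈ Set.Ioc (0:ℝ) 1, ∀ y ∈ Set.Ioc (0:ℝ) 1, f x y ≤ g x y) :
    ∫ x, ∫ y, f x y ∂muI ∂muI ≤ ∫ x, ∫ y, g x y ∂muI ∂muI := by
  have j1 : Integrable (fun x => ∫ y, f x y ∂muI) muI := hf.integral_prod_left
  have j2 : Integrable (fun x => ∫ y, g x y ∂muI) muI := hg.integral_prod_left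
  refine integral_mono_ae j1 j2 ?_
  filter_upwards [ae_muI, hf.prod_right_ae, hg.prod_right_ae] with x hx h1 h2
  refine integral_mono_ae h1 h2 ?_
  filter_upwards [ae_muI] with y hy
  exact h x hx y hy

lemma tF_int (a : ℝ) (ha : -1 < a) (n : ℕ) :
    Integrable (Function.uncurry fun t s => t ^ n * Ffun a n s * |t - s| ^ a)
      (muI.prod muI) := by
  have hm : Measurable (Ffun a n) := (F_antitone a ha n).measurable
  refine ker_prod_bdd a ha (fun p => p.1 ^ n * Ffun a n p.2) (by fun_prop) (Aint a n) ?_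
  intro x hx y hy
  have h1 := pow_le_one₀ (n := n) hx.1.le hx.2
  have h3 := pow_nonneg hx.1.le n
  have h4 := F_nonneg a n y
  rw [abs_of_nonneg (by positivity)]
  have := F_le a ha n y
  nlinarith

lemma t_int (a : ℝ) (ha : -1 < a) (n : ℕ) :
    Integrable (Function.uncurry fun t s => t ^ n * |t - s| ^ a) (muI.prod muI) := by
  refine ker_prod_bdd a ha (fun p => p.1 ^ n) (by fun_prop) 1 ?_
  intro x hx y hy
  rw [abs_of_nonneg (pow_nonneg hx.1.le n)]
  exact pow_le_one₀ hx.1.le hx.2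

lemma I_le (a : ℝ) (ha : -1 < a) (n : ℕ) :
    Iint a n ≤ Aint a n * ∫ t, ∫ s, t ^ n * |t - s| ^ a ∂muI ∂muI := by
  have e : Aint a n * ∫ t, ∫ s, t ^ n * |t - s| ^ a ∂muI ∂muI =
      ∫ t, ∫ s, Aint a n * (t ^ n * |t - s| ^ a) ∂muI ∂muI := by
    simp only [integral_const_mul]
  rw [e]
  refine dbl_mono _ _ (tF_int a ha n) ((t_int a ha n).const_mul (Aint a n)) ?_
  intro t ht s hs
  have h3 := pow_nonneg ht.1.le n
  have := F_le a ha n s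
  calc t ^ n * Ffun a n s * |t - s| ^ a ≤ t ^ n * Aint a n * |t - s| ^ a := by gcongr
    _ = _ := by ring

lemma le_I (a : ℝ) (ha : -1 < a) (ha0 : a < 0) (n : ℕ) :
    Aint a n * (∫ t, ∫ s, t ^ n * |t - s| ^ a ∂muI ∂muI) - Mbd a n / (n + 1) * Aint a n
      ≤ Iint a n := by
  have i1 := (tF_int a ha n)
  have i2 := (pp_int a ha n).const_mul (Mbd a n / (n + 1))
  have i12 : Integrable (Function.uncurry fun t s => t ^ n * Ffun a n s * |t - s| ^ a +
      Mbd a n / (n + 1) * (t ^ n * s ^ n * |t - s| ^ a)) (muI.prod muI) := i1.add i2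
  have e : Aint a n * ∫ t, ∫ s, t ^ n * |t - s| ^ a ∂muI ∂muI =
      ∫ t, ∫ s, Aint a n * (t ^ n * |t - s| ^ a) ∂muI ∂muI := by
    simp only [integral_const_mul]
  have e' : Mbd a n / (n + 1) * Aint a n =
      ∫ t, ∫ s, Mbd a n / (n + 1) * (t ^ n * s ^ n * |t - s| ^ a) ∂muI ∂muI := by
    simp only [integral_const_mul, Aint]
  have e'' : Iint a n + Mbd a n / (n + 1) * Aint a n =
      ∫ t, ∫ s, (t ^ n * Ffun a n s * |t - s| ^ a +
        Mbd a n / (n + 1) * (t ^ n * s ^ n * |t - s| ^ a)) ∂muI ∂muI := by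
    rw [e', Iint]
    exact (integral_integral_add i1 i2).symm
  rw [sub_le_iff_le_add, e'', e]
  refine dbl_mono _ _ ((t_int a ha n).const_mul (Aint a n)) i12 ?_
  intro t ht s hs
  have h3 := pow_nonneg ht.1.le n
  have := le_F a ha ha0 n s hs
  calc Aint a n * (t ^ n * |t - s| ^ a)
      ≤ (Ffun a n s + Mbd a n / (n + 1) * s ^ n) * (t ^ n * |t - s| ^ a) := by
        gcongr
        linarith
    _ = _ := by ring

lemma I_tendsto (a : ℝ) (ha : -1 < a) (ha0 : a < 0) :
    Tendsto (fun n : ℕ => (n:ℝ) ^ (a + 3) * Iint a n) atTop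
      (nhds (Real.Gamma (a + 1) * (1 / (a + 1)))) := by
  have hA : Tendsto (fun n : ℕ => (n:ℝ) ^ (a + 2) * Aint a n) atTop
      (nhds (Real.Gamma (a + 1))) := A_tendsto a ha ha0
  have hB := B_tendsto a ha
  have hAB := hA.mul hB
  have hq : Tendsto (fun n : ℕ => (n:ℝ) / (n + 1)) atTop (nhds 1) :=
    tendsto_natCast_div_add_atTop 1
  have hE := hAB.sub ((hq.mul (Mbd_tendsto a ha)).mul hA)
  simp only [mul_zero, zero_mul, sub_zero] at hE
  have hn3 : ∀ n : ℕ, (n:ℝ) ^ (a + 3) = (n:ℝ) ^ (a + 2) * n := by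
    intro n
    rw [← Real.rpow_add_one' (Nat.cast_nonneg n) (by linarith)]
    ring_nf
  refine tendsto_of_tendsto_of_tendsto_of_le_of_le hE hAB ?_ ?_
  · intro n
    simp only [hn3]
    have h := mul_le_mul_of_nonneg_left (le_I a ha ha0 n)
      (show (0:ℝ) ≤ (n:ℝ) ^ (a + 2) * n by positivity)
    refine le_trans (le_of_eq ?_) h
    ring
  · intro n
    simp only [hn3]
    have h := mul_le_mul_of_nonneg_left (I_le a ha n)
      (show (0:ℝ) ≤ (n:ℝ) ^ (a + 2) * n by positivity)
    refine le_trans h (le_of_eq ?_)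
    ring

lemma I_eq (a : ℝ) (n : ℕ) :
    (∫ t in (0:ℝ)..1, ∫ s in (0:ℝ)..1, ∫ θ in (0:ℝ)..1, ∫ ξ in (0:ℝ)..1,
          t ^ n * ξ ^ n * θ ^ n * Set.indicator (Set.Icc s 1) (fun _ => (1:ℝ)) θ *
            |t - s| ^ a * |ξ - θ| ^ a) = Iint a n := by
  simp only [intervalIntegral.integral_of_le zero_le_one]
  unfold Iint
  congr 1; funext t
  congr 1; funext s
  unfold Ffun
  rw [mul_right_comm, ← integral_const_mul]
  congr 1; funext θ
  have : ∀ ξ, t ^ n * ξ ^ n * θ ^ n * Set.indicator (Set.Icc s 1) (fun _ => (1:ℝ)) θ *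
            |t - s| ^ a * |ξ - θ| ^ a =
      (t ^ n * |t - s| ^ a * (θ ^ n * Set.indicator (Set.Icc s 1) (fun _ => (1:ℝ)) θ)) *
        (ξ ^ n * |ξ - θ| ^ a) := fun ξ => by ring
  simp only [this]
  rw [integral_const_mul, mul_assoc]
  congr 1
  by_cases h : θ ∈ Set.Icc s 1
  · rw [Set.indicator_of_mem h, Set.indicator_of_mem h, mul_one, gfun]
  · rw [Set.indicator_of_notMem h, Set.indicator_of_notMem h, mul_zero, zero_mul]

/-- For `H ∈ (1/2,1)`, the constants
`C_n = n^{1+2H} H²(2H−1)² ∫_{[0,1]⁴} tⁿξⁿθⁿ 1_{[s,1]}(θ) |t−s|^{2H−2}|ξ−θ|^{2H−2} dξdθdsdt`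
converge to `H²(2H−1)Γ(2H−1)` as `n → ∞`. -/
theorem stmt15 (H : ℝ) (hH : H ∈ Set.Ioo (1/2 : ℝ) 1) :
    Tendsto
      (fun n : ℕ => (n:ℝ) ^ (1 + 2 * H) * H ^ 2 * (2 * H - 1) ^ 2 *
        ∫ t in (0:ℝ)..1, ∫ s in (0:ℝ)..1, ∫ θ in (0:ℝ)..1, ∫ ξ in (0:ℝ)..1,
          t ^ n * ξ ^ n * θ ^ n * Set.indicator (Set.Icc s 1) (fun _ => (1:ℝ)) θ *
            |t - s| ^ (2 * H - 2) * |ξ - θ| ^ (2 * H - 2))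
      atTop (nhds (H ^ 2 * (2 * H - 1) * Real.Gamma (2 * H - 1))) := by
  obtain ⟨h1, h2⟩ := hH
  have h := I_tendsto (2 * H - 2) (by linarith) (by linarith)
  have h3 := h.const_mul (H ^ 2 * (2 * H - 1) ^ 2)
  have hne : 2 * H - 1 ≠ 0 := by linarith
  have e : H ^ 2 * (2 * H - 1) ^ 2 *
      (Real.Gamma (2 * H - 2 + 1) * (1 / (2 * H - 2 + 1))) =
      H ^ 2 * (2 * H - 1) * Real.Gamma (2 * H - 1) := by
    rw [show 2 * H - 2 + 1 = 2 * H - 1 by ring]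
    field_simp
  rw [e] at h3
  refine h3.congr fun n => ?_
  rw [I_eq, show 2 * H - 2 + 3 = 1 + 2 * H by ring]
  ring
end
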